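/- For every integer N ≥ 2 and every convex potential W : {1,…,N} → ℝ, the fundamental gap of the path Schrödinger operator satisfies Γ(H_W(P_N)) = λ_2 − λ_1 ≥ 2(1 − cos(π/N)). -/

import Mathlib

/-- The path Schrödinger operator `H_W(P_N)`: an `N × N` real symmetric matrix.
Vertex `i : Fin N` corresponds to the label `i + 1 ∈ {1, …, N}`. -/
noncomputable def pathH (N : ℕ) (W : ℕ → ℝ) : Matrix (Fin N) (Fin N) ℝ :=
  Matrix.of fun i j =>
    if i = j then
      (if (i : ℕ) = 0 ∨ (i : ℕ) = N - 1 then (1 : ℝ) else 2) + W ((i : ℕ) + 1)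
    else if (i : ℕ) + 1 = (j : ℕ) ∨ (j : ℕ) + 1 = (i : ℕ) then -1 else 0

/-- `μ` is an eigenvalue of the real matrix `A`. -/
def IsEigen {n : ℕ} (A : Matrix (Fin n) (Fin n) ℝ) (μ : ℝ) : Prop :=
  ∃ v : Fin n → ℝ, v ≠ 0 ∧ A.mulVec v = μ • v

/-- `l1 < l2` are the two smallest eigenvalues of `A`. -/
def TwoSmallest {n : ℕ} (A : Matrix (Fin n) (Fin n) ℝ) (l1 l2 : ℝ) : Prop :=
  IsEigen A l1 ∧ IsEigen A l2 ∧ l1 < l2 ∧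
    ∀ μ, IsEigen A μ → l1 ≤ μ ∧ (μ ≠ l1 → l2 ≤ μ)

/-!
The gap is minimised over the compact convex set of convex potentials with a given bound on their
slopes. In each operator the ground state `u` can be taken positive and the quotient `v / u` with
the first excited state strictly increasing, so the first variation `v ^ 2 - u ^ 2` of the gap
changes sign only where `v / u` crosses `-1` and `1`. A convex potential minus its chord between
these two crossings has the same sign pattern; at a minimiser, the variation towards the chord then
forces the potential to be linear.

For a linear potential, the discrete derivative `F` of `v / u` satisfies a Jacobi equation with
Dirichlet conditions, which is tested against the Dirichlet sine mode. The resulting defect has no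
pointwise sign, but its sum over a pair of sites exchanged by the reflection of the path is
nonnegative. This rests on two comparisons of the left half of the path with its reflection, one for
the ratios `u (i + 1) / u i` and one for `F`; the latter assumes, for contradiction, that the gap is
below the bound.
-/

section SymmetricMatrix

open Matrix
open scoped Matrix.Norms.L2Operator

variable {n : Type*} [Fintype n] {A B D : Matrix n n ℝ} {l l₁ l₂ m₁ m₂ : ℝ} {u v u' v' w : n → ℝ}

theorem dotProduct_mulVec_comm_of_isSymm {R : Type*} [CommSemiring R] {A : Matrix n n R}
    (hA : A.IsSymm) (x y : n → R) : x ⬝ᵥ A *ᵥ y = y ⬝ᵥ A *ᵥ x := by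
  rw [dotProduct_mulVec, ← mulVec_transpose, hA.eq, dotProduct_comm]

theorem sq_dotProduct_mulVec_le [DecidableEq n] (D : Matrix n n ℝ) (x y : n → ℝ) :
    (x ⬝ᵥ D *ᵥ y) ^ 2 ≤ ‖D‖ ^ 2 * (x ⬝ᵥ x) * (y ⬝ᵥ y) := by
  have norm_sq (z : n → ℝ) : ‖WithLp.toLp 2 z‖ ^ 2 = z ⬝ᵥ z := by
    rw [EuclideanSpace.real_norm_sq_eq]
    simp only [dotProduct, sq]
  have h : |x ⬝ᵥ D *ᵥ y| ≤ ‖D‖ * ‖WithLp.toLp 2 x‖ * ‖WithLp.toLp 2 y‖ := by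
    have h₁ := abs_real_inner_le_norm (WithLp.toLp 2 x)
      (toEuclideanCLM (n := n) (𝕜 := ℝ) D (WithLp.toLp 2 y))
    have h₂ := l2_opNorm_mulVec D (WithLp.toLp 2 y)
    rw [inner_toEuclideanCLM] at h₁
    calc _ ≤ _ := h₁
      _ ≤ ‖WithLp.toLp 2 x‖ * (‖D‖ * ‖WithLp.toLp 2 y‖) := by gcongr; exact h₂
      _ = _ := by ring
  simpa [mul_pow, norm_sq] using pow_le_pow_left₀ (abs_nonneg _) h 2

theorem mulVec_eq_smul_of_dotProduct_mulVec_le (hA : A.IsSymm)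
    (hle : ∀ x, l * (x ⬝ᵥ x) ≤ x ⬝ᵥ A *ᵥ x) (hw : w ⬝ᵥ A *ᵥ w ≤ l * (w ⬝ᵥ w)) :
    A *ᵥ w = l • w := by
  classical
  have form_eq (x : n → ℝ) :
      star x ⬝ᵥ (A - l • (1 : Matrix n n ℝ)) *ᵥ x = x ⬝ᵥ A *ᵥ x - l * (x ⬝ᵥ x) := by
    simp [sub_mulVec, smul_mulVec]
  have hpos : (A - l • (1 : Matrix n n ℝ)).PosSemidef :=
    .of_dotProduct_mulVec_nonneg (by simp [hA, IsSymm.sub, IsSymm.smul])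
      fun x => by rw [form_eq]; linarith [hle x]
  have hzero := (hpos.dotProduct_mulVec_zero_iff w).1 (by rw [form_eq]; linarith [hle w])
  simpa [sub_mulVec, smul_mulVec, sub_eq_zero] using hzero

/-- Orthonormal eigenvectors `u`, `v` of `A` for its two lowest eigenvalues `l₁ ≤ l₂`, counted with
multiplicity; that they are the lowest ones is expressed by the min-max characterisation. -/
structure IsLowestPair (A : Matrix n n ℝ) (l₁ l₂ : ℝ) (u v : n → ℝ) : Prop where
  mulVec_fst : A *ᵥ u = l₁ • u
  mulVec_snd : A *ᵥ v = l₂ • v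
  dotProduct_fst : u ⬝ᵥ u = 1
  dotProduct_snd : v ⬝ᵥ v = 1
  orthogonal : u ⬝ᵥ v = 0
  le : l₁ ≤ l₂
  le_of_orthogonal : ∀ x, u ⬝ᵥ x = 0 → l₂ * (x ⬝ᵥ x) ≤ x ⬝ᵥ A *ᵥ x

theorem exists_isLowestPair [Nontrivial n] (hA : A.IsSymm) :
    ∃ l₁ l₂ u v, IsLowestPair A l₁ l₂ u v := by
  classical
  have hH : A.IsHermitian := isHermitian_iff_isSymm.2 hA
  set b := hH.eigenvectorBasis
  set e := hH.eigenvalues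
  have inner_eq (x y : EuclideanSpace ℝ n) : inner ℝ x y = x.ofLp ⬝ᵥ y.ofLp := by
    simp [EuclideanSpace.inner_eq_star_dotProduct, dotProduct_comm]
  have mulVec_b (k : n) : A *ᵥ (b k).ofLp = e k • (b k).ofLp := hH.mulVec_eigenvectorBasis k
  have b_dot (j k : n) : (b j).ofLp ⬝ᵥ (b k).ofLp = if j = k then 1 else 0 := by
    rw [← inner_eq, b.inner_eq_ite]
  have parseval (x y : n → ℝ) : ∑ k, (b k).ofLp ⬝ᵥ x * ((b k).ofLp ⬝ᵥ y) = x ⬝ᵥ y := by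
    have h := b.sum_inner_mul_inner (WithLp.toLp 2 x) (WithLp.toLp 2 y)
    simpa only [inner_eq, dotProduct_comm x] using h
  obtain ⟨i, hi⟩ := Finite.exists_min e
  obtain ⟨j, hj_mem, hj⟩ := Finset.exists_min_image (Finset.univ.erase i) e <|
    (exists_ne i).imp fun k hk => by simpa using hk
  have hji : j ≠ i := by simpa using hj_mem
  refine ⟨e i, e j, (b i).ofLp, (b j).ofLp, mulVec_b i, mulVec_b j, by simp [b_dot],
    by simp [b_dot], by simp [b_dot, hji.symm], hi j, fun x hx => ?_⟩
  rw [← parseval x x, ← parseval x (A *ᵥ x), Finset.mul_sum]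
  refine Finset.sum_le_sum fun k _ => ?_
  rw [dotProduct_mulVec_comm_of_isSymm hA (b k).ofLp x, mulVec_b, dotProduct_smul, smul_eq_mul,
    dotProduct_comm x]
  by_cases hk : k = i
  · simp [hk, hx]
  · nlinarith [hj k (by simpa using hk), sq_nonneg ((b k).ofLp ⬝ᵥ x)]

theorem sq_dotProduct_add_sq_dotProduct_le (hu : u ⬝ᵥ u = 1) (hv : v ⬝ᵥ v = 1) (huv : u ⬝ᵥ v = 0)
    (x : n → ℝ) : (x ⬝ᵥ u) ^ 2 + (x ⬝ᵥ v) ^ 2 ≤ x ⬝ᵥ x := by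
  set y := x - (x ⬝ᵥ u) • u - (x ⬝ᵥ v) • v
  have hy : y ⬝ᵥ y = x ⬝ᵥ x - (x ⬝ᵥ u) ^ 2 - (x ⬝ᵥ v) ^ 2 := by
    simp only [y, sub_dotProduct, dotProduct_sub, smul_dotProduct, dotProduct_smul, smul_eq_mul,
      hu, hv, huv, dotProduct_comm v u, dotProduct_comm u x, dotProduct_comm v x]
    ring
  have : 0 ≤ y ⬝ᵥ y := by simpa using dotProduct_star_self_nonneg y
  linarith

namespace IsLowestPair

section

variable (h : IsLowestPair A l₁ l₂ u v)
include h

theorem fst_ne_zero : u ≠ 0 := by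
  rintro rfl
  simpa using h.dotProduct_fst

theorem snd_ne_zero : v ≠ 0 := by
  rintro rfl
  simpa using h.dotProduct_snd

theorem sq_dotProduct_fst_le (x : n → ℝ) : (x ⬝ᵥ u) ^ 2 ≤ x ⬝ᵥ x :=
  (le_add_of_nonneg_right (sq_nonneg _)).trans <|
    sq_dotProduct_add_sq_dotProduct_le h.dotProduct_fst h.dotProduct_snd h.orthogonal x

theorem dotProduct_mulVec_fst : u ⬝ᵥ A *ᵥ u = l₁ := by
  rw [h.mulVec_fst, dotProduct_smul, h.dotProduct_fst, smul_eq_mul, mul_one]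

theorem dotProduct_mulVec_snd : v ⬝ᵥ A *ᵥ v = l₂ := by
  rw [h.mulVec_snd, dotProduct_smul, h.dotProduct_snd, smul_eq_mul, mul_one]

theorem le_dotProduct_mulVec (hA : A.IsSymm) (x : n → ℝ) :
    l₁ * (x ⬝ᵥ u) ^ 2 + l₂ * (x ⬝ᵥ x - (x ⬝ᵥ u) ^ 2) ≤ x ⬝ᵥ A *ᵥ x := by
  set y := x - (x ⬝ᵥ u) • u with hy
  have hyu : u ⬝ᵥ y = 0 := by
    rw [hy, dotProduct_sub, dotProduct_smul, h.dotProduct_fst, dotProduct_comm u x]; simp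
  have hyy : y ⬝ᵥ y = x ⬝ᵥ x - (x ⬝ᵥ u) ^ 2 := by
    simp only [hy, sub_dotProduct, dotProduct_sub, smul_dotProduct, dotProduct_smul, smul_eq_mul,
      h.dotProduct_fst, dotProduct_comm u x]
    ring
  have hyAy : y ⬝ᵥ A *ᵥ y = x ⬝ᵥ A *ᵥ x - l₁ * (x ⬝ᵥ u) ^ 2 := by
    simp only [hy, mulVec_sub, mulVec_smul, sub_dotProduct, dotProduct_sub, smul_dotProduct,
      dotProduct_smul, smul_eq_mul, dotProduct_mulVec_comm_of_isSymm hA u x, h.mulVec_fst,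
      h.dotProduct_fst]
    ring
  rw [← hyy]
  linarith [h.le_of_orthogonal y hyu]

theorem fst_mul_dotProduct_self_le (hA : A.IsSymm) (x : n → ℝ) :
    l₁ * (x ⬝ᵥ x) ≤ x ⬝ᵥ A *ᵥ x := by
  nlinarith [h.le_dotProduct_mulVec hA x, h.sq_dotProduct_fst_le x, h.le]

theorem mulVec_eq_snd_smul_of_le (hA : A.IsSymm) (huw : u ⬝ᵥ w = 0)
    (hw : w ⬝ᵥ A *ᵥ w ≤ l₂ * (w ⬝ᵥ w)) : A *ᵥ w = l₂ • w := by
  -- The rank-one perturbation raises the lowest eigenvalue to `l₂` and keeps all the others.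
  set B := A + (l₂ - l₁) • vecMulVec u u with hB
  have mulVec_B (x : n → ℝ) : B *ᵥ x = A *ᵥ x + ((l₂ - l₁) * (u ⬝ᵥ x)) • u := by
    simp [hB, add_mulVec, smul_mulVec, vecMulVec_mulVec, smul_smul]
  have hBsymm : B.IsSymm := by
    refine hA.add (IsSymm.smul ?_ _)
    ext i j
    simp [vecMulVec_apply, mul_comm]
  have hBw : B *ᵥ w = l₂ • w := by
    refine mulVec_eq_smul_of_dotProduct_mulVec_le hBsymm (fun x => ?_) ?_
    · have := h.le_dotProduct_mulVec hA x
      rw [mulVec_B, dotProduct_add, dotProduct_smul, smul_eq_mul, dotProduct_comm u x]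
      linarith
    · simpa [mulVec_B, huw] using hw
  simpa [mulVec_B, huw] using hBw

theorem of_dotProduct_mulVec_le (hA : A.IsSymm) (huw : u ⬝ᵥ w = 0) (hw_unit : w ⬝ᵥ w = 1)
    (hw : w ⬝ᵥ A *ᵥ w ≤ l₂ * (w ⬝ᵥ w)) : IsLowestPair A l₁ l₂ u w :=
  { h with
    mulVec_snd := h.mulVec_eq_snd_smul_of_le hA huw hw
    dotProduct_snd := hw_unit
    orthogonal := huw }

theorem eq_fst_or_snd_le_of_mulVec_eq (hA : A.IsSymm) (hw : w ≠ 0) (hAw : A *ᵥ w = l • w) :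
    l = l₁ ∨ l₂ ≤ l := by
  have hpos : 0 < w ⬝ᵥ w := by simpa using dotProduct_star_self_pos_iff.2 hw
  have horth : (l - l₁) * (u ⬝ᵥ w) = 0 := by
    have := dotProduct_mulVec_comm_of_isSymm hA u w
    rw [hAw, h.mulVec_fst, dotProduct_smul, dotProduct_smul, smul_eq_mul, smul_eq_mul,
      dotProduct_comm w u] at this
    linarith
  refine (mul_eq_zero.1 horth).imp sub_eq_zero.1 fun huw => ?_
  have := h.le_of_orthogonal w huw
  rw [hAw, dotProduct_smul, smul_eq_mul] at this
  exact le_of_mul_le_mul_right this hpos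

end

section Perturbation

variable (h : IsLowestPair A l₁ l₂ u v) (h' : IsLowestPair B m₁ m₂ u' v')
include h h'

theorem fst_le_fst_add (hB : B.IsSymm) : m₁ ≤ l₁ + u ⬝ᵥ (B - A) *ᵥ u := by
  have := h'.fst_mul_dotProduct_self_le hB u
  rw [sub_mulVec, dotProduct_sub, h.dotProduct_mulVec_fst]
  rw [h.dotProduct_fst] at this
  linarith

/-- Ky Fan's trace inequality for the two lowest eigenvalues. -/
theorem fst_add_snd_le (hB : B.IsSymm) :
    m₁ + m₂ ≤ l₁ + l₂ + u ⬝ᵥ (B - A) *ᵥ u + v ⬝ᵥ (B - A) *ᵥ v := by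
  have hu := h'.le_dotProduct_mulVec hB u
  have hv := h'.le_dotProduct_mulVec hB v
  have bessel :=
    sq_dotProduct_add_sq_dotProduct_le h.dotProduct_fst h.dotProduct_snd h.orthogonal u'
  rw [h'.dotProduct_fst, dotProduct_comm u', dotProduct_comm u'] at bessel
  rw [h.dotProduct_fst] at hu
  rw [h.dotProduct_snd] at hv
  simp only [sub_mulVec, dotProduct_sub, h.dotProduct_mulVec_fst, h.dotProduct_mulVec_snd]
  nlinarith [h'.le]

theorem gap_le_gap_add_norm [DecidableEq n] (hA : A.IsSymm) (hB : B.IsSymm) :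
    m₂ - m₁ ≤ l₂ - l₁ + 4 * ‖B - A‖ := by
  have form_le {x : n → ℝ} (hx : x ⬝ᵥ x = 1) : |x ⬝ᵥ (B - A) *ᵥ x| ≤ ‖B - A‖ := by
    refine abs_le_of_sq_le_sq ?_ (norm_nonneg _)
    simpa [hx] using sq_dotProduct_mulVec_le (B - A) x x
  have hsum := h.fst_add_snd_le h' hB
  have hfst := h'.fst_le_fst_add h hA
  rw [← neg_sub B A, neg_mulVec, dotProduct_neg] at hfst
  linarith [(abs_le.1 (form_le h.dotProduct_fst)).2, (abs_le.1 (form_le h.dotProduct_snd)).2,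
    (abs_le.1 (form_le h'.dotProduct_fst)).1]

theorem fst_add_sub_sq_norm_div_le [DecidableEq n] (hA : A.IsSymm) (hB : B.IsSymm) (hl : l₁ < l₂) :
    l₁ + u ⬝ᵥ (B - A) *ᵥ u - ‖B - A‖ ^ 2 / (l₂ - l₁) ≤ m₁ := by
  set D := B - A with hD
  have hform := h.le_dotProduct_mulVec hA u'
  rw [h'.dotProduct_fst] at hform
  set c := u' ⬝ᵥ u
  have hdiff : u' ⬝ᵥ D *ᵥ u' - u ⬝ᵥ D *ᵥ u = (u' - u) ⬝ᵥ D *ᵥ (u' + u) := by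
    rw [mulVec_add, sub_dotProduct, dotProduct_add, dotProduct_add,
      dotProduct_mulVec_comm_of_isSymm (hB.sub hA) u u']
    ring
  -- `‖u' - u‖ ‖u' + u‖ = 2 √(1 - c²)`, the distance between the lines spanned by `u` and `u'`.
  have hsq : (u' ⬝ᵥ D *ᵥ u' - u ⬝ᵥ D *ᵥ u) ^ 2 ≤ 4 * ‖D‖ ^ 2 * (1 - c ^ 2) := by
    have := sq_dotProduct_mulVec_le D (u' - u) (u' + u)
    rw [← hdiff, sub_dotProduct, dotProduct_sub, dotProduct_sub, add_dotProduct, dotProduct_add,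
      dotProduct_add, h.dotProduct_fst, h'.dotProduct_fst, dotProduct_comm u u'] at this
    linarith
  have hm : m₁ = u' ⬝ᵥ A *ᵥ u' + u' ⬝ᵥ D *ᵥ u' := by
    rw [hD, sub_mulVec, dotProduct_sub, h'.dotProduct_mulVec_fst]
    ring
  have hγ : 0 < l₂ - l₁ := sub_pos.2 hl
  set d := u' ⬝ᵥ D *ᵥ u' - u ⬝ᵥ D *ᵥ u
  have amgm : 0 ≤ (l₂ - l₁) * (1 - c ^ 2) + d + ‖D‖ ^ 2 / (l₂ - l₁) := by
    have hc : 0 ≤ 1 - c ^ 2 := by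
      linarith [h.sq_dotProduct_fst_le u', h'.dotProduct_fst]
    have hsum : 0 ≤ (l₂ - l₁) * (1 - c ^ 2) + ‖D‖ ^ 2 / (l₂ - l₁) := by positivity
    have hprod : (l₂ - l₁) * (1 - c ^ 2) * (‖D‖ ^ 2 / (l₂ - l₁)) = ‖D‖ ^ 2 * (1 - c ^ 2) := by
      field_simp
    have hdsq : |d| ≤ (l₂ - l₁) * (1 - c ^ 2) + ‖D‖ ^ 2 / (l₂ - l₁) := by
      refine abs_le_of_sq_le_sq ?_ hsum
      nlinarith [sq_nonneg ((l₂ - l₁) * (1 - c ^ 2) - ‖D‖ ^ 2 / (l₂ - l₁))]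
    linarith [(abs_le.1 hdsq).1]
  linarith

end Perturbation

/-- The first variation of the gap in the direction `D` is `v ⬝ᵥ D *ᵥ v - u ⬝ᵥ D *ᵥ u`. -/
theorem dotProduct_mulVec_fst_le_snd (h : IsLowestPair A l₁ l₂ u v) (hA : A.IsSymm) (hD : D.IsSymm)
    (hl : l₁ < l₂)
    (hmin : ∀ t ∈ Set.Ioc (0 : ℝ) 1,
      ∃ m₁ m₂ u' v', IsLowestPair (A + t • D) m₁ m₂ u' v' ∧ l₂ - l₁ ≤ m₂ - m₁) :
    u ⬝ᵥ D *ᵥ u ≤ v ⬝ᵥ D *ᵥ v := by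
  classical
  have second_order : ∀ t ∈ Set.Ioc (0 : ℝ) 1,
      u ⬝ᵥ D *ᵥ u ≤ v ⬝ᵥ D *ᵥ v + t * (2 * ‖D‖ ^ 2 / (l₂ - l₁)) := by
    intro t ht
    obtain ⟨m₁, m₂, u', v', h', hgap⟩ := hmin t ht
    have hsymm : (A + t • D).IsSymm := hA.add (hD.smul t)
    have hsum := h.fst_add_snd_le h' hsymm
    have hfst := h.fst_add_sub_sq_norm_div_le h' hA hsymm hl
    rw [add_sub_cancel_left, norm_smul, Real.norm_of_nonneg ht.1.le] at hfst
    simp only [add_sub_cancel_left, smul_mulVec, dotProduct_smul, smul_eq_mul] at hsum hfst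
    have hsq : (t * ‖D‖) ^ 2 / (l₂ - l₁) = t * (t * ‖D‖ ^ 2 / (l₂ - l₁)) := by ring
    refine le_of_mul_le_mul_left ?_ ht.1
    linear_combination hsum + 2 * hfst + hgap + 2 * hsq
  refine ge_of_tendsto (f := fun t => v ⬝ᵥ D *ᵥ v + t * (2 * ‖D‖ ^ 2 / (l₂ - l₁)))
    (x := nhdsWithin 0 (Set.Ioi 0)) ?_ ?_
  · refine tendsto_nhdsWithin_of_tendsto_nhds ?_
    exact Continuous.tendsto' (by fun_prop) _ _ (by simp)
  · filter_upwards [Ioc_mem_nhdsGT one_pos] with t ht using second_order t ht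

end IsLowestPair

end SymmetricMatrix

section GroundState

open Matrix

variable {n : Type*} [Fintype n] {A : Matrix n n ℝ} {l l₁ l₂ : ℝ} {u v f g : n → ℝ}

theorem dotProduct_mulVec_mul_sub_eq (hA : A.IsSymm) (hu : A *ᵥ u = l • u) (f : n → ℝ) :
    (u * f) ⬝ᵥ A *ᵥ (u * f) - l * ((u * f) ⬝ᵥ (u * f)) =
      -(∑ i, ∑ j, A i j * (u i * u j) * (f i - f j) ^ 2) / 2 := by
  have diag (i : n) : l * (u i * f i * (u i * f i)) = ∑ j, A i j * (u i * u j) * f i ^ 2 := by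
    have hi : ∑ j, A i j * u j = l * u i := congrFun hu i
    calc l * (u i * f i * (u i * f i)) = u i * f i ^ 2 * ∑ j, A i j * u j := by rw [hi]; ring
      _ = _ := by rw [Finset.mul_sum]; exact Finset.sum_congr rfl fun j _ => by ring
  have hfst : l * ((u * f) ⬝ᵥ (u * f)) = ∑ i, ∑ j, A i j * (u i * u j) * f i ^ 2 := by
    simp only [dotProduct, Pi.mul_apply, Finset.mul_sum, diag]
  have hsnd : l * ((u * f) ⬝ᵥ (u * f)) = ∑ i, ∑ j, A i j * (u i * u j) * f j ^ 2 := by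
    rw [hfst, Finset.sum_comm]
    refine Finset.sum_congr rfl fun i _ => Finset.sum_congr rfl fun j _ => ?_
    rw [hA.apply, mul_comm (u i)]
  have hcross : (u * f) ⬝ᵥ A *ᵥ (u * f) = ∑ i, ∑ j, A i j * (u i * u j) * (f i * f j) := by
    simp only [dotProduct, mulVec, Pi.mul_apply, Finset.mul_sum]
    exact Finset.sum_congr rfl fun i _ => Finset.sum_congr rfl fun j _ => by ring
  have hsplit : ∑ i, ∑ j, A i j * (u i * u j) * (f i - f j) ^ 2 =
      ∑ i, ∑ j, A i j * (u i * u j) * f i ^ 2 + ∑ i, ∑ j, A i j * (u i * u j) * f j ^ 2 -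
        2 * ∑ i, ∑ j, A i j * (u i * u j) * (f i * f j) := by
    simp only [Finset.mul_sum, ← Finset.sum_add_distrib, ← Finset.sum_sub_distrib]
    exact Finset.sum_congr rfl fun i _ => Finset.sum_congr rfl fun j _ => by ring
  linarith

theorem sq_dotProduct_mul_sub_eq (hu : u ⬝ᵥ u = 1) (f : n → ℝ) :
    (u ⬝ᵥ (u * f)) ^ 2 - (u * f) ⬝ᵥ (u * f) =
      -(∑ i, ∑ j, (u i * u j) ^ 2 * (f i - f j) ^ 2) / 2 := by
  have hsymm : (vecMulVec u u).IsSymm := by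
    ext i j
    simp [vecMulVec_apply, mul_comm]
  have h := dotProduct_mulVec_mul_sub_eq hsymm (l := 1) (u := u)
    (by simp [vecMulVec_mulVec, hu]) f
  simpa [vecMulVec_mulVec, vecMulVec_apply, dotProduct_comm (u * f) u, ← sq] using h

theorem dotProduct_mulVec_mul_sub_congr (hA : A.IsSymm) (hu : A *ᵥ u = l • u)
    (heq : ∀ i j, A i j ≠ 0 → (g i - g j) ^ 2 = (f i - f j) ^ 2) :
    (u * g) ⬝ᵥ A *ᵥ (u * g) - l * ((u * g) ⬝ᵥ (u * g)) =
      (u * f) ⬝ᵥ A *ᵥ (u * f) - l * ((u * f) ⬝ᵥ (u * f)) := by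
  rw [dotProduct_mulVec_mul_sub_eq hA hu, dotProduct_mulVec_mul_sub_eq hA hu]
  congr 2
  refine Finset.sum_congr rfl fun i _ => Finset.sum_congr rfl fun j _ => ?_
  by_cases hij : A i j = 0
  · simp [hij]
  · rw [heq i j hij]

theorem variance_mul_le_of_sq_sub_le (hu : u ⬝ᵥ u = 1)
    (hle : ∀ i j, (f i - f j) ^ 2 ≤ (g i - g j) ^ 2) :
    (u * f) ⬝ᵥ (u * f) - (u ⬝ᵥ (u * f)) ^ 2 ≤ (u * g) ⬝ᵥ (u * g) - (u ⬝ᵥ (u * g)) ^ 2 := by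
  have hmono : ∑ i, ∑ j, (u i * u j) ^ 2 * (f i - f j) ^ 2 ≤
      ∑ i, ∑ j, (u i * u j) ^ 2 * (g i - g j) ^ 2 :=
    Finset.sum_le_sum fun i _ => Finset.sum_le_sum fun j _ =>
      mul_le_mul_of_nonneg_left (hle i j) (sq_nonneg _)
  linarith [sq_dotProduct_mul_sub_eq hu f, sq_dotProduct_mul_sub_eq hu g]

namespace IsLowestPair

/-- Passing from `f` to `g` keeps the energy of `u * f` and does not decrease its variance. -/
theorem exists_mul_of_sq_sub_le (h : IsLowestPair A l₁ l₂ u (u * f)) (hA : A.IsSymm)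
    (hle : ∀ i j, (f i - f j) ^ 2 ≤ (g i - g j) ^ 2)
    (heq : ∀ i j, A i j ≠ 0 → (g i - g j) ^ 2 = (f i - f j) ^ 2) :
    ∃ c κ : ℝ, 0 < c ∧ IsLowestPair A l₁ l₂ u (u * fun i => c * (g i - κ)) := by
  set κ := u ⬝ᵥ (u * g)
  set g' : n → ℝ := fun i => g i - κ with hg'
  set w := u * g' with hw
  have huw : u ⬝ᵥ w = 0 := by
    have : w = u * g - κ • u := by
      ext i
      simp only [hw, hg', Pi.mul_apply, Pi.sub_apply, Pi.smul_apply, smul_eq_mul]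
      ring
    rw [this, dotProduct_sub, dotProduct_smul, h.dotProduct_fst, smul_eq_mul, mul_one, sub_self]
  have sub_eq (i j : n) : g' i - g' j = g i - g j := sub_sub_sub_cancel_right _ _ _
  have hww : 1 ≤ w ⬝ᵥ w := by
    have := variance_mul_le_of_sq_sub_le h.dotProduct_fst (g := g') (by simpa only [sub_eq])
    rw [h.orthogonal, h.dotProduct_snd, huw] at this
    linarith
  have hwAw : w ⬝ᵥ A *ᵥ w ≤ l₂ * (w ⬝ᵥ w) := by
    have := dotProduct_mulVec_mul_sub_congr hA h.mulVec_fst (f := f) (g := g')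
      (by simpa only [sub_eq])
    rw [h.dotProduct_mulVec_snd, h.dotProduct_snd] at this
    nlinarith [h.le]
  set c := (√(w ⬝ᵥ w))⁻¹
  have hc : 0 < c := by positivity
  have hcc : c * c * (w ⬝ᵥ w) = 1 := by
    rw [← mul_inv, Real.mul_self_sqrt (by positivity), inv_mul_cancel₀ (by positivity)]
  have hcw : (u * fun i => c * (g i - κ)) = c • w := by
    ext i
    simp only [hw, hg', Pi.mul_apply, Pi.smul_apply, smul_eq_mul]
    ring
  refine ⟨c, κ, hc, hcw ▸ h.of_dotProduct_mulVec_le hA (by simp [huw]) ?_ ?_⟩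
  · simpa [mul_assoc] using hcc
  · simp only [mulVec_smul, dotProduct_smul, smul_dotProduct, smul_eq_mul]
    nlinarith [mul_pos hc hc]

end IsLowestPair

/-- `A` is a (weighted) Schrödinger operator on the graph `G`: off the diagonal, which carries the
potential, it is negative on the edges of `G` and zero elsewhere. -/
structure IsSchrodinger (G : SimpleGraph n) (A : Matrix n n ℝ) : Prop where
  isSymm : A.IsSymm
  neg_of_adj : ∀ {i j}, G.Adj i j → A i j < 0
  eq_zero_of_not_adj : ∀ {i j}, i ≠ j → ¬G.Adj i j → A i j = 0

namespace IsSchrodinger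

variable {G : SimpleGraph n} (hA : IsSchrodinger G A)
include hA

omit [Fintype n] in
theorem nonpos {i j : n} (hij : i ≠ j) : A i j ≤ 0 := by
  by_cases h : G.Adj i j
  · exact (hA.neg_of_adj h).le
  · exact (hA.eq_zero_of_not_adj hij h).le

theorem pos_of_nonneg (hG : G.Connected) (hu : A *ᵥ u = l • u) (hnonneg : 0 ≤ u) (hne : u ≠ 0)
    (i : n) : 0 < u i := by
  have zero_of_adj {i j : n} (hij : G.Adj i j) (hi : u i = 0) : u j = 0 := by
    have hterm (k : n) : A i k * u k ≤ 0 := by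
      rcases eq_or_ne i k with rfl | hik
      · simp [hi]
      · exact mul_nonpos_of_nonpos_of_nonneg (hA.nonpos hik) (hnonneg k)
    have hsum : ∑ k, A i k * u k = 0 := (congrFun hu i).trans (by simp [hi])
    have := (Finset.sum_eq_zero_iff_of_nonpos fun k _ => hterm k).1 hsum j (Finset.mem_univ j)
    exact (mul_eq_zero.1 this).resolve_left (hA.neg_of_adj hij).ne
  refine (hnonneg i).lt_of_ne' fun hi => hne ?_
  ext j
  obtain ⟨p⟩ := hG.preconnected i j
  induction p with
  | nil => exact hi
  | cons hij _ ih => exact ih (zero_of_adj hij hi)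

theorem dotProduct_mulVec_abs_le (u : n → ℝ) : |u| ⬝ᵥ A *ᵥ |u| ≤ u ⬝ᵥ A *ᵥ u := by
  simp only [dotProduct, mulVec, Finset.mul_sum, Pi.abs_apply]
  refine Finset.sum_le_sum fun i _ => Finset.sum_le_sum fun j _ => ?_
  rcases eq_or_ne i j with rfl | hij
  · rw [mul_left_comm, abs_mul_abs_self, mul_left_comm]
  · nlinarith [hA.nonpos hij, le_abs_self (u i * u j), abs_mul (u i) (u j)]

theorem forall_pos_or_forall_neg (hG : G.Connected) (hle : ∀ x, l * (x ⬝ᵥ x) ≤ x ⬝ᵥ A *ᵥ x)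
    (hu : A *ᵥ u = l • u) (hne : u ≠ 0) : (∀ i, 0 < u i) ∨ ∀ i, u i < 0 := by
  have habs : A *ᵥ |u| = l • |u| := by
    refine mulVec_eq_smul_of_dotProduct_mulVec_le hA.isSymm hle ?_
    have : |u| ⬝ᵥ |u| = u ⬝ᵥ u := by simp [dotProduct]
    rw [this, ← smul_eq_mul, ← dotProduct_smul, ← hu]
    exact hA.dotProduct_mulVec_abs_le u
  have abs_pos := hA.pos_of_nonneg hG habs (abs_nonneg u) (by simpa using hne)
  by_cases hsum : |u| + u = 0
  · right
    intro i
    have : |u i| + u i = 0 := congrFun hsum i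
    have : 0 < |u i| := abs_pos i
    linarith
  · left
    intro i
    have hsum_pos := hA.pos_of_nonneg hG (u := |u| + u) (by rw [mulVec_add, habs, hu, smul_add])
      (fun j => by simpa using neg_le_iff_add_nonneg'.1 (neg_abs_le (u j))) hsum i
    by_contra! hi
    simp [abs_of_nonpos hi] at hsum_pos

theorem exists_isLowestPair_pos [Nontrivial n] (hG : G.Connected) :
    ∃ l₁ l₂ u v, IsLowestPair A l₁ l₂ u v ∧ ∀ i, 0 < u i := by
  obtain ⟨l₁, l₂, u, v, h⟩ := exists_isLowestPair hA.isSymm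
  rcases hA.forall_pos_or_forall_neg hG (h.fst_mul_dotProduct_self_le hA.isSymm) h.mulVec_fst
    h.fst_ne_zero with hu | hu
  · exact ⟨l₁, l₂, u, v, h, hu⟩
  · refine ⟨l₁, l₂, -u, v, ⟨?_, h.mulVec_snd, ?_, h.dotProduct_snd, ?_, h.le, fun x hx => ?_⟩, ?_⟩
    · rw [mulVec_neg, h.mulVec_fst, smul_neg]
    · rw [neg_dotProduct_neg, h.dotProduct_fst]
    · rw [neg_dotProduct, h.orthogonal, neg_zero]
    · exact h.le_of_orthogonal x (by simpa using hx)
    · simpa using hu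

theorem fst_lt_snd (hG : G.Connected) (h : IsLowestPair A l₁ l₂ u v) (hu : ∀ i, 0 < u i) :
    l₁ < l₂ := by
  refine h.le.lt_of_ne ?_
  rintro rfl
  have := hG.nonempty
  have horth : ∑ i, u i * v i = 0 := h.orthogonal
  rcases hA.forall_pos_or_forall_neg hG (h.fst_mul_dotProduct_self_le hA.isSymm) h.mulVec_snd
    h.snd_ne_zero with hv | hv
  · exact (Finset.sum_pos (fun i _ => mul_pos (hu i) (hv i)) Finset.univ_nonempty).ne' horth
  · exact (Finset.sum_neg (fun i _ => mul_neg_of_pos_of_neg (hu i) (hv i))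
      Finset.univ_nonempty).ne horth

end IsSchrodinger

end GroundState

section NeumannSolution

variable {N : ℕ} {q p x y u v : ℕ → ℝ} {γ : ℝ}

/-- `x` solves the second-order recurrence with coefficients `q` at the sites `1, …, N`, with
discrete Neumann conditions at the ghost sites `0` and `N + 1`. -/
structure IsNeumannSolution (N : ℕ) (q x : ℕ → ℝ) : Prop where
  left : x 0 = x 1
  right : x (N + 1) = x N
  step : ∀ i < N, x (i + 2) + x i = q (i + 1) * x (i + 1)

namespace IsNeumannSolution

theorem congr (h : IsNeumannSolution N q x) (hqp : ∀ i < N, q (i + 1) = p (i + 1)) :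
    IsNeumannSolution N p x :=
  ⟨h.left, h.right, fun i hi => by rw [h.step i hi, hqp i hi]⟩

theorem eq_zero_of_consecutive (h : IsNeumannSolution N q x) {j : ℕ} (hj : j ≤ N) (h₀ : x j = 0)
    (h₁ : x (j + 1) = 0) {i : ℕ} (hi : i ≤ N) : x i = 0 := by
  have down : ∀ i ≤ j, x i = 0 ∧ x (i + 1) = 0 := by
    intro i hi
    induction hi using Nat.decreasingInduction with
    | self => exact ⟨h₀, h₁⟩
    | of_succ i hi ih => exact ⟨by simpa [ih.1, ih.2] using h.step i (by omega), ih.1⟩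
  have up : ∀ i ≤ N, x i = 0 ∧ x (i + 1) = 0 := by
    intro i
    induction i with
    | zero => exact fun _ => down 0 j.zero_le
    | succ i ih =>
      intro hi
      obtain ⟨h₀, h₁⟩ := ih (by omega)
      exact ⟨h₁, by simpa [h₀, h₁] using h.step i hi⟩
  exact (up i hi).1

end IsNeumannSolution

/-- The discrete Wronskian of `x` and `y` on the edge from `i` to `i + 1`. -/
def wronskian (x y : ℕ → ℝ) (i : ℕ) : ℝ :=
  x i * y (i + 1) - x (i + 1) * y i

theorem IsNeumannSolution.wronskian_zero (hx : IsNeumannSolution N q x)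
    (hy : IsNeumannSolution N p y) : wronskian x y 0 = 0 := by
  rw [wronskian, hx.left, hy.left, sub_self]

theorem IsNeumannSolution.wronskian_last (hx : IsNeumannSolution N q x)
    (hy : IsNeumannSolution N p y) : wronskian x y N = 0 := by
  rw [wronskian, hx.right, hy.right, sub_self]

theorem IsNeumannSolution.wronskian_succ (hx : IsNeumannSolution N q x)
    (hy : IsNeumannSolution N p y) {i : ℕ} (hi : i < N) :
    wronskian x y (i + 1) =
      wronskian x y i + (p (i + 1) - q (i + 1)) * (x (i + 1) * y (i + 1)) := by
  simp only [wronskian]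
  linear_combination x (i + 1) * hy.step i hi - y (i + 1) * hx.step i hi

/-- `u` is a positive solution and `v` a solution with spectral parameter raised by `γ`, and `v / u`
is strictly increasing: the ground state and the first excited state of a path operator. -/
structure IsGroundExcitedPair (N : ℕ) (q : ℕ → ℝ) (γ : ℝ) (u v : ℕ → ℝ) : Prop where
  ground : IsNeumannSolution N q u
  excited : IsNeumannSolution N (fun i => q i - γ) v
  gap_pos : 0 < γ
  pos : ∀ i ≤ N + 1, 0 < u i
  wronskian_pos : ∀ i, 0 < i → i < N → 0 < wronskian u v i

theorem IsGroundExcitedPair.congr (h : IsGroundExcitedPair N q γ u v)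
    (hqp : ∀ i < N, q (i + 1) = p (i + 1)) : IsGroundExcitedPair N p γ u v :=
  { h with
    ground := h.ground.congr hqp
    excited := h.excited.congr fun i hi => by rw [hqp i hi] }

theorem IsGroundExcitedPair.excited_last_pos (h : IsGroundExcitedPair N q γ u v) (hN : 2 ≤ N) :
    0 < v N := by
  obtain ⟨n, rfl⟩ : ∃ n, N = n + 1 := ⟨N - 1, by omega⟩
  have hlast := h.ground.wronskian_succ h.excited n.lt_succ_self
  rw [h.ground.wronskian_last h.excited] at hlast
  have hpos := h.wronskian_pos n (by omega) (by omega)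
  have : 0 < γ * u (n + 1) * v (n + 1) := by linarith
  exact pos_of_mul_pos_right this (mul_nonneg h.gap_pos.le (h.pos _ (by omega)).le)

theorem IsNeumannSolution.isGroundExcitedPair (hu : IsNeumannSolution N q u)
    (hv : IsNeumannSolution N (fun i => q i - γ) v) (hγ : 0 < γ) (hpos : ∀ i ≤ N + 1, 0 < u i)
    (hv₀ : ∃ i ≤ N, v i ≠ 0) (hmono : ∀ i, 0 < i → i < N → 0 ≤ wronskian u v i) :
    IsGroundExcitedPair N q γ u v := by
  refine ⟨hu, hv, hγ, hpos, fun i hi₀ hiN => (hmono i hi₀ hiN).lt_of_ne' fun hi => ?_⟩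
  have nonneg : ∀ i ≤ N, 0 ≤ wronskian u v i := by
    intro i hi
    rcases i.eq_zero_or_pos with rfl | hi₀
    · exact (hu.wronskian_zero hv).ge
    rcases hi.eq_or_lt with rfl | hiN
    · exact (hu.wronskian_last hv).ge
    · exact hmono i hi₀ hiN
  obtain ⟨j, rfl⟩ : ∃ j, i = j + 1 := ⟨i - 1, by omega⟩
  have hprev := hu.wronskian_succ hv (show j < N by omega)
  have hnext := hu.wronskian_succ hv hiN
  rw [hi] at hprev hnext
  have left_nonneg : 0 ≤ v (j + 1) := by
    have : 0 ≤ γ * u (j + 1) * v (j + 1) := by linarith [nonneg j (by omega)]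
    exact nonneg_of_mul_nonneg_right this (mul_pos hγ (hpos _ (by omega)))
  have right_nonpos : v (j + 2) ≤ 0 := by
    have : 0 ≤ γ * u (j + 2) * -v (j + 2) := by linarith [nonneg (j + 2) hiN]
    exact neg_nonneg.1 (nonneg_of_mul_nonneg_right this (mul_pos hγ (hpos _ (by omega))))
  have hw : u (j + 1) * v (j + 2) = u (j + 2) * v (j + 1) := sub_eq_zero.1 hi
  have hu₁ := hpos (j + 1) (by omega)
  have hu₂ := hpos (j + 2) (by omega)
  have left_zero : v (j + 1) = 0 := by nlinarith
  have right_zero : v (j + 2) = 0 := by nlinarith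
  obtain ⟨k, hk, hvk⟩ := hv₀
  exact hvk (hv.eq_zero_of_consecutive (by omega) left_zero right_zero hk)

end NeumannSolution

section Path

open Matrix SimpleGraph

variable {N : ℕ} {W : ℕ → ℝ} {l l₁ l₂ : ℝ}

/-- The vector of the values of a sequence at the sites `1, …, N` of the path. -/
def siteValues (N : ℕ) (x : ℕ → ℝ) : Fin N → ℝ :=
  fun i => x (i + 1)

theorem pathH_isSchrodinger (N : ℕ) (W : ℕ → ℝ) : IsSchrodinger (pathGraph N) (pathH N W) where
  isSymm := by
    ext i j
    rcases eq_or_ne i j with rfl | hij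
    · rfl
    · simp [pathH, hij, hij.symm, or_comm]
  neg_of_adj {i j} hij := by
    have hne : i ≠ j := hij.ne
    rw [pathGraph_adj] at hij
    simp [pathH, hne, hij]
  eq_zero_of_not_adj {i j} hne hij := by
    rw [pathGraph_adj] at hij
    simp [pathH, hne, hij]

theorem pathH_mulVec_siteValues (hN : 2 ≤ N) {x : ℕ → ℝ} (hleft : x 0 = x 1)
    (hright : x (N + 1) = x N) (i : Fin N) :
    (pathH N W *ᵥ siteValues N x) i =
      (2 + W (i + 1)) * x (i + 1) - x i - x (i + 2) := by
  set d : ℝ := if (i : ℕ) = 0 ∨ (i : ℕ) = N - 1 then 1 else 2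
  have hterm (j : Fin N) : pathH N W i j * x (j + 1) =
      (if (j : ℕ) = i then (d + W (i + 1)) * x (i + 1) else 0) +
        (if (j : ℕ) = i + 1 then -x (i + 2) else 0) + if (j : ℕ) + 1 = i then -x i else 0 := by
    simp only [pathH, of_apply, Fin.ext_iff]
    grind
  have hsum : (pathH N W *ᵥ siteValues N x) i =
      ∑ j ∈ Finset.range N, ((if j = i then (d + W (i + 1)) * x (i + 1) else 0) +
        (if j = i + 1 then -x (i + 2) else 0) + if j + 1 = i then -x i else 0) := by
    rw [Finset.sum_range, mulVec, dotProduct]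
    exact Finset.sum_congr rfl fun j _ => hterm j
  have hprev : ∑ j ∈ Finset.range N, (if j + 1 = (i : ℕ) then -x i else 0) =
      if 0 < (i : ℕ) then -x i else 0 := by
    obtain ⟨_ | k, hk⟩ := i
    · simp
    · simp [show k < N by omega]
  rw [hsum, Finset.sum_add_distrib, Finset.sum_add_distrib, Finset.sum_ite_eq', hprev,
    Finset.sum_ite_eq', if_pos (Finset.mem_range.2 i.is_lt)]
  simp only [Finset.mem_range]
  grind

theorem exists_isNeumannSolution (hN : 2 ≤ N) {w : Fin N → ℝ} (hw : pathH N W *ᵥ w = l • w) :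
    ∃ x, IsNeumannSolution N (fun i => 2 + W i - l) x ∧ siteValues N x = w := by
  set x : ℕ → ℝ := fun i => w ⟨min (i - 1) (N - 1), by omega⟩ with hx
  have hxw : siteValues N x = w := by
    ext i
    simp only [siteValues, hx, Nat.add_sub_cancel]
    congr
    omega
  have hleft : x 0 = x 1 := rfl
  have hright : x (N + 1) = x N := by simp [hx]
  refine ⟨x, ⟨hleft, hright, fun i hi => ?_⟩, hxw⟩
  have hrow := congrFun hw ⟨i, hi⟩
  rw [← hxw, pathH_mulVec_siteValues hN hleft hright] at hrow
  simp only [Pi.smul_apply, siteValues, smul_eq_mul] at hrow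
  linarith

theorem IsLowestPair.exists_monotone {A : Matrix (Fin N) (Fin N) ℝ} {u v : Fin N → ℝ}
    (h : IsLowestPair A l₁ l₂ u v) (hA : IsSchrodinger (pathGraph N) A) (hu : ∀ i, 0 < u i) :
    ∃ f : Fin N → ℝ, Monotone f ∧ IsLowestPair A l₁ l₂ u (u * f) := by
  set f : ℕ → ℝ := Function.extend Fin.val (v / u) 0
  have hv : v = u * fun i : Fin N => f i := by
    ext i
    simp [f, Fin.val_injective.extend_apply, mul_div_cancel₀ _ (hu i).ne']
  set g : ℕ → ℝ := fun i => ∑ k ∈ Finset.range i, |f (k + 1) - f k|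
  have g_sub {i j : ℕ} (hij : i ≤ j) : |f j - f i| ≤ g j - g i := by
    have := dist_le_Ico_sum_dist f hij
    rw [← Finset.sum_Ico_eq_sub _ hij]
    simpa only [Real.dist_eq, abs_sub_comm] using this
  have g_succ (i : ℕ) : |g (i + 1) - g i| = |f (i + 1) - f i| := by
    simp [g, Finset.sum_range_succ]
  have g_mono : Monotone g := fun i j hij => by linarith [g_sub hij, abs_nonneg (f j - f i)]
  have sq_le (i j : Fin N) : (f i - f j) ^ 2 ≤ (g i - g j) ^ 2 := by
    rw [sq_le_sq]
    rcases le_total (i : ℕ) j with hij | hij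
    · rw [abs_sub_comm, abs_sub_comm (g i)]
      exact (g_sub hij).trans (le_abs_self _)
    · exact (g_sub hij).trans (le_abs_self _)
  have sq_eq (i j : Fin N) (hij : A i j ≠ 0) : (g i - g j) ^ 2 = (f i - f j) ^ 2 := by
    rcases eq_or_ne i j with rfl | hne
    · simp
    rw [sq_eq_sq_iff_abs_eq_abs]
    rcases pathGraph_adj.1 (not_imp_comm.1 (hA.eq_zero_of_not_adj hne) hij) with hij | hij
    · rw [← hij, abs_sub_comm, g_succ, abs_sub_comm]
    · rw [← hij, g_succ]
  obtain ⟨c, κ, hc, h'⟩ := (hv ▸ h).exists_mul_of_sq_sub_le hA.isSymm sq_le sq_eq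
  refine ⟨_, fun i j hij => ?_, h'⟩
  have := g_mono (Fin.le_def.1 hij)
  gcongr

theorem exists_isGroundExcitedPair (hN : 2 ≤ N) (W : ℕ → ℝ) :
    ∃ l₁ l₂ u v, IsLowestPair (pathH N W) l₁ l₂ (siteValues N u) (siteValues N v) ∧
      IsGroundExcitedPair N (fun i => 2 + W i - l₁) (l₂ - l₁) u v := by
  have hA := pathH_isSchrodinger N W
  have hG : (pathGraph N).Connected := by
    obtain ⟨n, rfl⟩ : ∃ n, N = n + 1 := ⟨N - 1, by omega⟩
    exact pathGraph_connected n
  have : Nontrivial (Fin N) := Fin.nontrivial_iff_two_le.2 hN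
  obtain ⟨l₁, l₂, u', v', h', hpos'⟩ := hA.exists_isLowestPair_pos hG
  obtain ⟨f, hf, h⟩ := h'.exists_monotone hA hpos'
  obtain ⟨u, hu, rfl⟩ := exists_isNeumannSolution hN h.mulVec_fst
  obtain ⟨v, hv, hvf⟩ := exists_isNeumannSolution hN h.mulVec_snd
  rw [← hvf] at h
  have hpos : ∀ i ≤ N + 1, 0 < u i := by
    intro i hi
    have inside (j : ℕ) (hj : j < N) : 0 < u (j + 1) := hpos' ⟨j, hj⟩
    obtain _ | i := i
    · exact hu.left ▸ inside 0 (by omega)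
    rcases (Nat.le_of_succ_le_succ hi).eq_or_lt with rfl | hiN
    · obtain ⟨n, rfl⟩ : ∃ n, i = n + 1 := ⟨i - 1, by omega⟩
      exact hu.right ▸ inside n (by omega)
    · exact inside i hiN
  refine ⟨l₁, l₂, u, v, h, hu.isGroundExcitedPair ?_ (sub_pos.2 (hA.fst_lt_snd hG h hpos')) hpos
    ?_ fun i hi₀ hiN => ?_⟩
  · exact hv.congr fun i _ => by ring
  · obtain ⟨i, hi⟩ := Function.ne_iff.1 h.snd_ne_zero
    exact ⟨i + 1, i.is_lt, hi⟩
  · obtain ⟨j, rfl⟩ : ∃ j, i = j + 1 := ⟨i - 1, by omega⟩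
    have hv_eq (k : ℕ) (hk : k < N) : v (k + 1) = u (k + 1) * f ⟨k, hk⟩ := congrFun hvf ⟨k, hk⟩
    have hle : f ⟨j, by omega⟩ ≤ f ⟨j + 1, hiN⟩ := hf (Fin.mk_le_mk.2 j.le_succ)
    rw [wronskian, hv_eq j (by omega), hv_eq (j + 1) hiN]
    nlinarith [mul_pos (hpos (j + 1) (by omega)) (hpos (j + 2) (by omega))]

end Path

section LinearGroundState

variable {N : ℕ} {q u : ℕ → ℝ} {α a : ℝ}

theorem IsNeumannSolution.antitone_of_monotone (hu : IsNeumannSolution N q u)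
    (hpos : ∀ i ≤ N + 1, 0 < u i) (hq : Monotone q) {i : ℕ} (hi : i ≤ N) : u (i + 1) ≤ u i := by
  set d : ℕ → ℝ := fun i => u (i + 1) - u i with hd
  have d_succ (j : ℕ) (hj : j < N) : d (j + 1) = d j + (q (j + 1) - 2) * u (j + 1) := by
    simp only [hd]
    linarith [hu.step j hj]
  suffices d i ≤ 0 from sub_nonpos.1 this
  obtain _ | k := i
  · exact (sub_eq_zero.2 hu.left.symm).le
  rcases le_total (q (k + 1)) 2 with hk | hk
  · have below : ∀ j ≤ k + 1, d j ≤ 0 := by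
      intro j
      induction j with
      | zero => exact fun _ => (sub_eq_zero.2 hu.left.symm).le
      | succ j ih =>
        intro hj
        have : q (j + 1) ≤ 2 := (hq hj).trans hk
        rw [d_succ j (by omega)]
        nlinarith [ih (by omega), hpos (j + 1) (by omega)]
    exact below _ le_rfl
  · have above : ∀ j ≤ N, k + 1 ≤ j → d j ≤ 0 := by
      intro j hj
      induction hj using Nat.decreasingInduction with
      | self => exact fun _ => (sub_eq_zero.2 hu.right).le
      | of_succ j hj ih =>
        intro hkj
        have : 2 ≤ q (j + 1) := hk.trans (hq (by omega))
        nlinarith [ih (by omega), d_succ j hj, hpos (j + 1) (by omega)]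
    exact above _ hi le_rfl

theorem two_le_add_inv {x : ℝ} (hx : 0 < x) : 2 ≤ x + x⁻¹ := by
  rw [← sub_nonneg, show x + x⁻¹ - 2 = (x - 1) ^ 2 / x by field_simp; ring]
  positivity

theorem mul_sub_mul_add_le_of_recurrence {C e f x₀ x₁ x₂ x₃ y₀ y₁ y₂ y₃ : ℝ} (he : 0 ≤ e)
    (hf : 0 ≤ f) (hx₂ : x₂ + x₀ = (C - e) * x₁) (hx₃ : x₃ + x₁ = (C - f) * x₂)
    (hy₂ : y₂ + y₀ = (C + e) * y₁) (hy₃ : y₃ + y₁ = (C + f) * y₂) (hx₀₁ : x₁ ≤ x₀) (hx₁₂ : x₂ ≤ x₁)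
    (hx : 0 ≤ x₂) (hy : 0 ≤ y₀) (hy₀₁ : y₀ ≤ y₁) (hy₁₂ : y₁ ≤ y₂) :
    (x₁ * y₁ - x₀ * y₀) + (x₃ * y₃ - x₂ * y₂) ≤ (C ^ 2 - 2) * (x₂ * y₂ - x₁ * y₁) := by
  have h₁ : 0 ≤ e ^ 2 * (x₁ * y₁) + e * (x₀ * y₁ - x₁ * y₀) := by
    have hx₁ : 0 ≤ x₁ := hx.trans hx₁₂
    have : x₁ * y₀ ≤ x₀ * y₁ := mul_le_mul hx₀₁ hy₀₁ hy (hx₁.trans hx₀₁)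
    have := mul_nonneg hx₁ (hy.trans hy₀₁)
    have := sub_nonneg.2 ‹x₁ * y₀ ≤ x₀ * y₁›
    positivity
  have h₂ : 0 ≤ f ^ 2 * (x₂ * y₂) + f * (x₁ * y₂ - x₂ * y₁) := by
    have hy₁ : 0 ≤ y₁ := hy.trans hy₀₁
    have : x₂ * y₁ ≤ x₁ * y₂ := mul_le_mul hx₁₂ hy₁₂ hy₁ (hx.trans hx₁₂)
    have := mul_nonneg hx (hy₁.trans hy₁₂)
    have := sub_nonneg.2 ‹x₂ * y₁ ≤ x₁ * y₂›
    positivity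
  obtain rfl : x₀ = (C - e) * x₁ - x₂ := by linarith
  obtain rfl : x₃ = (C - f) * x₂ - x₁ := by linarith
  obtain rfl : y₀ = (C + e) * y₁ - y₂ := by linarith
  obtain rfl : y₃ = (C + f) * y₂ - y₁ := by linarith
  linarith

theorem neg_of_add_le_mul {h : ℕ → ℝ} {K : ℝ} {m i j : ℕ} (hK : 2 ≤ K) (h₀ : 0 ≤ h 0)
    (hstep : ∀ i, i + 2 ≤ m → h i + h (i + 2) ≤ K * h (i + 1)) (hi : h i < 0) (hij : i ≤ j)
    (hjm : j ≤ m) : h j < 0 := by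
  classical
  have hex : ∃ k, h k < 0 := ⟨i, hi⟩
  obtain ⟨k, hk⟩ : ∃ k, Nat.find hex = k + 1 :=
    Nat.exists_eq_succ_of_ne_zero fun hzero => (hzero ▸ Nat.find_spec hex).not_ge h₀
  have hk_nonneg : 0 ≤ h k := not_lt.1 (Nat.find_min hex (by omega))
  have hk_neg : h (k + 1) < 0 := hk ▸ Nat.find_spec hex
  have decreasing : ∀ j, k + 1 ≤ j → j ≤ m → h j < h (j - 1) ∧ h j < 0 := by
    intro j hkj
    induction j, hkj using Nat.le_induction with
    | base => exact fun _ => ⟨hk_neg.trans_le hk_nonneg, hk_neg⟩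
    | succ j hkj ih =>
      intro hjm
      obtain ⟨j, rfl⟩ : ∃ i, j = i + 1 := ⟨j - 1, by omega⟩
      obtain ⟨hlt, hneg⟩ := ih (by omega)
      have := hstep j hjm
      rw [Nat.add_sub_cancel] at hlt ⊢
      constructor <;> nlinarith
  exact (decreasing j (by linarith [Nat.find_min' hex hi]) hjm).2

theorem mul_lt_sq_of_riccati {p q s w : ℝ} (hp : 0 < p) (hq : 0 < q) (hs : 0 < s) (hsq : s < q)
    (hps : p * s < q ^ 2) (hw : w + s⁻¹ = 2 * (s + q⁻¹) - (q + p⁻¹)) : q * w < s ^ 2 := by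
  have hp_inv : s / q ^ 2 < p⁻¹ := by
    rw [div_lt_iff₀ (by positivity), inv_mul_eq_div, lt_div_iff₀ hp]
    linarith
  have hid : q * (2 * (s + q⁻¹) - (q + s / q ^ 2) - s⁻¹) =
      s ^ 2 - (q - s) ^ 2 - (q - s) ^ 2 / (q * s) := by
    field_simp
    ring
  calc q * w < q * (2 * (s + q⁻¹) - (q + s / q ^ 2) - s⁻¹) := by gcongr; linarith
    _ ≤ s ^ 2 := by
      have : 0 ≤ (q - s) ^ 2 / (q * s) := by positivity
      linarith [sq_nonneg (q - s)]

/-- The ratio of consecutive terms; it turns the recurrence of `IsNeumannSolution` into a Riccati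
equation. -/
noncomputable def ratio (u : ℕ → ℝ) (i : ℕ) : ℝ :=
  u (i + 1) / u i

theorem IsNeumannSolution.ratio_succ_add_inv (hu : IsNeumannSolution N q u) {i : ℕ} (hi : i < N)
    (hne : u (i + 1) ≠ 0) : ratio u (i + 1) + (ratio u i)⁻¹ = q (i + 1) := by
  rw [ratio, ratio, inv_div, ← add_div, hu.step i hi, mul_div_cancel_right₀ _ hne]

theorem IsNeumannSolution.two_mul_le_sum (hu : IsNeumannSolution N q u)
    (hpos : ∀ i ≤ N + 1, 0 < u i) : 2 * (N : ℝ) ≤ ∑ i ∈ Finset.range N, q (i + 1) := by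
  have ratio_pos (i : ℕ) (hi : i ≤ N) : 0 < ratio u i :=
    div_pos (hpos _ (by omega)) (hpos _ (by omega))
  have shift : ∑ i ∈ Finset.range N, ratio u (i + 1) = ∑ i ∈ Finset.range N, ratio u i := by
    have hleft : ratio u 0 = 1 := by rw [ratio, hu.left, div_self (hpos _ (by omega)).ne']
    have hright : ratio u N = 1 := by rw [ratio, hu.right, div_self (hpos _ (by omega)).ne']
    linarith [Finset.sum_range_succ (ratio u) N, Finset.sum_range_succ' (ratio u) N]
  have hq : ∑ i ∈ Finset.range N, q (i + 1) =
      ∑ i ∈ Finset.range N, (ratio u i + (ratio u i)⁻¹) := by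
    rw [Finset.sum_add_distrib, ← shift, ← Finset.sum_add_distrib]
    refine Finset.sum_congr rfl fun i hi => ?_
    have hiN := Finset.mem_range.1 hi
    rw [hu.ratio_succ_add_inv hiN (hpos _ (by omega)).ne']
  calc 2 * (N : ℝ) = ∑ _i ∈ Finset.range N, (2 : ℝ) := by simp [mul_comm]
    _ ≤ _ := Finset.sum_le_sum fun i hi =>
      two_le_add_inv (ratio_pos i (Finset.mem_range.1 hi).le)
    _ = _ := hq.symm

/-- A positive Neumann solution for a coefficient `α + a * i` which is affine and increasing in the
site `i`. -/
structure IsLinearGroundState (N : ℕ) (α a : ℝ) (u : ℕ → ℝ) : Prop extends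
    IsNeumannSolution N (fun i => α + a * i) u where
  pos : ∀ i ≤ N + 1, 0 < u i
  slope_nonneg : 0 ≤ a

namespace IsLinearGroundState

variable (h : IsLinearGroundState N α a u)
include h

theorem apply_succ_le {i : ℕ} (hi : i ≤ N) : u (i + 1) ≤ u i :=
  h.antitone_of_monotone h.pos
    (fun i j hij => by have := h.slope_nonneg; dsimp only; gcongr) hi

theorem two_le_mean (hN : 0 < N) : 2 ≤ α + a * (N + 1) / 2 := by
  have hsum := h.two_mul_le_sum h.pos
  have gauss : ∑ i ∈ Finset.range N, (α + a * ((i + 1 : ℕ) : ℝ)) =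
      N * (α + a * (N + 1) / 2) := by
    clear h hsum hN
    induction N with
    | zero => simp
    | succ N ih => rw [Finset.sum_range_succ, ih]; push_cast; ring
  rw [gauss, mul_comm] at hsum
  exact le_of_mul_le_mul_left hsum (by positivity)

theorem ratio_pos {i : ℕ} (hi : i ≤ N) : 0 < ratio u i :=
  div_pos (h.pos _ (by omega)) (h.pos _ (by omega))

theorem ratio_le_one {i : ℕ} (hi : i ≤ N) : ratio u i ≤ 1 :=
  div_le_one_of_le₀ (h.apply_succ_le hi) (h.pos _ (by omega)).le

theorem ratio_last : ratio u N = 1 := by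
  rw [ratio, h.right, div_self (h.pos N (by omega)).ne']

theorem riccati {i : ℕ} (hi : i < N) : ratio u (i + 1) + (ratio u i)⁻¹ = α + a * (i + 1) := by
  simpa using h.ratio_succ_add_inv hi (h.pos _ (by omega)).ne'

theorem mul_reflect_sub_add_le {j k : ℕ} (hk : N = 2 * j + 3 + k) :
    (u (j + 1) * u (j + k + 3) - u j * u (j + k + 4)) +
        (u (j + 3) * u (j + k + 1) - u (j + 2) * u (j + k + 2)) ≤
      ((α + a * (N + 1) / 2) ^ 2 - 2) *
        (u (j + 2) * u (j + k + 2) - u (j + 1) * u (j + k + 3)) := by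
  set C := α + a * (N + 1) / 2 with hC
  have hCk : C = α + a * (2 * j + k + 4) / 2 := by rw [hC, hk]; push_cast; ring
  have ha := h.slope_nonneg
  have hx₂ := h.step j (by omega)
  have hx₃ := h.step (j + 1) (by omega)
  have hy₂ := h.step (j + k + 2) (by omega)
  have hy₃ := h.step (j + k + 1) (by omega)
  push_cast at hx₂ hx₃ hy₂ hy₃
  exact mul_sub_mul_add_le_of_recurrence (e := a * (k + 2) / 2) (f := a * k / 2) (by positivity)
    (by positivity) (by rw [hCk]; linear_combination hx₂) (by rw [hCk]; linear_combination hx₃)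
    (by rw [hCk]; linear_combination hy₂) (by rw [hCk]; linear_combination hy₃)
    (h.apply_succ_le (by omega)) (h.apply_succ_le (by omega)) (h.pos _ (by omega)).le
    (h.pos _ (by omega)).le (h.apply_succ_le (by omega)) (h.apply_succ_le (by omega))

theorem ratio_reflect_le {i : ℕ} (hi : 2 * i ≤ N) : ratio u (N - i) ≤ ratio u i := by
  set C := α + a * (N + 1) / 2
  set g : ℕ → ℝ := fun i => u i * u (N + 1 - i) with hg
  set d : ℕ → ℝ := fun i => g (i + 1) - g i with hd
  have d_reflect {j : ℕ} (hj : j ≤ N) : d (N - j) = -d j := by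
    simp only [hd, hg, show N - j + 1 = N + 1 - j by omega,
      show N + 1 - (N + 1 - j) = j by omega, show N + 1 - (N - j) = j + 1 by omega,
      show N + 1 - (j + 1) = N - j by omega]
    ring
  have d_step (j : ℕ) (hj : j + 2 ≤ N - N / 2) : d j + d (j + 2) ≤ (C ^ 2 - 2) * d (j + 1) := by
    obtain ⟨k, hk⟩ : ∃ k, N = 2 * j + 3 + k := ⟨N - (2 * j + 3), by omega⟩
    have index (m n : ℕ) (hmn : m + n = 2 * j + k + 4) : N + 1 - m = n := by omega
    simp only [hd, hg, index j (j + k + 4) (by omega), index (j + 1) (j + k + 3) (by omega),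
      index (j + 1 + 1) (j + k + 2) (by omega), index (j + 2 + 1) (j + k + 1) (by omega)]
    exact h.mul_reflect_sub_add_le hk
  suffices 0 ≤ d i by
    rw [ratio, ratio, div_le_div_iff₀ (h.pos _ (by omega)) (h.pos _ (by omega)), ← sub_nonneg]
    simpa only [hd, hg, show N + 1 - (i + 1) = N - i by omega, show N - i + 1 = N + 1 - i by omega,
      mul_comm (u i)] using this
  have d_zero : d 0 = 0 := by
    simp only [hd, hg, zero_add, Nat.sub_zero, Nat.add_sub_cancel, h.left, h.right, sub_self]
  by_contra! hneg
  obtain rfl | hN := N.eq_zero_or_pos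
  · obtain rfl : i = 0 := by omega
    exact hneg.ne d_zero
  have hC : 2 ≤ C := h.two_le_mean hN
  have hC₂ : 2 ≤ C ^ 2 - 2 := by nlinarith
  have neg (j : ℕ) := neg_of_add_le_mul (j := j) hC₂ d_zero.ge d_step hneg
  have h₁ := neg (N / 2) (by omega) (by omega)
  have h₂ := neg (N - N / 2) (by omega) le_rfl
  rw [d_reflect (by omega)] at h₂
  linarith

theorem sq_ratio_le_of_ratio_lt {i : ℕ} (hi : i + 2 ≤ N) (hlt : ratio u (i + 2) < ratio u (i + 1)) :
    ratio u (i + 1) ^ 2 ≤ ratio u i * ratio u (i + 2) := by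
  by_contra! hcon
  have decreasing : ∀ j, i ≤ j → j + 2 ≤ N → ratio u (j + 2) < ratio u (j + 1) ∧
      ratio u j * ratio u (j + 2) < ratio u (j + 1) ^ 2 := by
    intro j hij
    induction j, hij using Nat.le_induction with
    | base => exact fun _ => ⟨hlt, hcon⟩
    | succ j _ ih =>
      intro hj
      obtain ⟨hlt, hsq⟩ := ih (by omega)
      have hpos : 0 < ratio u (j + 1) := h.ratio_pos (by omega)
      have r₁ := h.riccati (show j < N by omega)
      have r₂ := h.riccati (show j + 1 < N by omega)
      have r₃ := h.riccati (show j + 2 < N by omega)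
      push_cast at r₂ r₃
      have hsq' : ratio u (j + 1) * ratio u (j + 3) < ratio u (j + 2) ^ 2 :=
        mul_lt_sq_of_riccati (h.ratio_pos (by omega)) hpos (h.ratio_pos (by omega)) hlt hsq
          (by linarith)
      refine ⟨lt_of_mul_lt_mul_left (hsq'.trans ?_) hpos.le, hsq'⟩
      nlinarith [h.ratio_pos (show j + 2 ≤ N by omega)]
  obtain ⟨n, rfl⟩ : ∃ n, N = n + 2 := ⟨N - 2, by omega⟩
  have hlast := (decreasing n (by omega) le_rfl).1
  rw [h.ratio_last] at hlast
  exact (h.ratio_le_one (by omega)).not_gt hlast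

theorem ratio_lt_and_mul_le {i j : ℕ} (hij : i ≤ j) (hj : j + 1 ≤ N)
    (hlt : ratio u (j + 1) < ratio u j) :
    ratio u (i + 1) < ratio u i ∧ ratio u (i + 1) * ratio u j ≤ ratio u i * ratio u (j + 1) := by
  induction hij using Nat.decreasingInduction with
  | self => exact ⟨hlt, (mul_comm _ _).le⟩
  | of_succ k hk ih =>
    obtain ⟨hlt_succ, hmul⟩ := ih
    have hsq := h.sq_ratio_le_of_ratio_lt (by omega) hlt_succ
    have h₀ := h.ratio_pos (show k ≤ N by omega)
    have h₁ := h.ratio_pos (show k + 1 ≤ N by omega)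
    have hjpos := h.ratio_pos (show j ≤ N by omega)
    constructor
    · nlinarith
    · refine le_of_mul_le_mul_left ?_ h₁
      calc ratio u (k + 1) * (ratio u (k + 1) * ratio u j)
          = ratio u (k + 1) ^ 2 * ratio u j := by ring
        _ ≤ ratio u k * ratio u (k + 2) * ratio u j := by gcongr
        _ = ratio u k * (ratio u (k + 2) * ratio u j) := by ring
        _ ≤ ratio u k * (ratio u (k + 1) * ratio u (j + 1)) := by gcongr
        _ = ratio u (k + 1) * (ratio u k * ratio u (j + 1)) := by ring

theorem ratio_succ_le {i : ℕ} (hi : 2 * i + 1 ≤ N) : ratio u (i + 1) ≤ ratio u i := by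
  by_contra! hcon
  have increasing : ∀ j, i + 1 ≤ j → j ≤ N → ratio u (i + 1) ≤ ratio u j := by
    intro j hj
    induction j, hj using Nat.le_induction with
    | base => exact fun _ => le_rfl
    | succ j hj ih =>
      refine fun hjN => (ih (by omega)).trans (not_lt.1 fun hlt => ?_)
      exact hcon.not_gt (h.ratio_lt_and_mul_le (by omega) hjN hlt).1
  linarith [increasing (N - i) (by omega) (by omega), h.ratio_reflect_le (i := i) (by omega)]

theorem ratio_mul_ratio_reflect_succ_le {i : ℕ} (hi : 2 * i + 1 ≤ N) :
    ratio u (i + 1) * ratio u (N - (i + 1)) ≤ ratio u i * ratio u (N - i) := by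
  rcases hi.eq_or_lt with hi | hi
  · rw [show N - (i + 1) = i by omega, show N - i = i + 1 by omega, mul_comm]
  obtain ⟨j, hj⟩ : ∃ j, N = i + j + 1 := ⟨N - (i + 1), by omega⟩
  rw [show N - (i + 1) = j by omega, show N - i = j + 1 by omega]
  rcases lt_or_ge (ratio u (j + 1)) (ratio u j) with hlt | hle
  · exact (h.ratio_lt_and_mul_le (by omega) (by omega) hlt).2
  · exact mul_le_mul (h.ratio_succ_le (by omega)) hle (h.ratio_pos (by omega)).le
      (h.ratio_pos (by omega)).le

end IsLinearGroundState

end LinearGroundState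

section SineMode

open Real

variable {N : ℕ}

/-- The first Dirichlet eigenvector of the path on the sites `0, …, N`, with eigenvalue
`2 * (1 - cos (π / N))`. -/
noncomputable def sineMode (N i : ℕ) : ℝ :=
  sin (π * i / N)

theorem sineMode_zero : sineMode N 0 = 0 := by
  simp [sineMode]

theorem sineMode_self (hN : 0 < N) : sineMode N N = 0 := by
  have : (N : ℝ) ≠ 0 := by positivity
  rw [sineMode, mul_div_cancel_right₀ _ this, sin_pi]

theorem sineMode_pos {i : ℕ} (hi₀ : 0 < i) (hi : i < N) : 0 < sineMode N i := by
  have hN : (0 : ℝ) < N := by exact_mod_cast hi₀.trans hi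
  refine sin_pos_of_pos_of_lt_pi (by positivity) ?_
  rw [div_lt_iff₀ hN]
  gcongr

theorem sineMode_nonneg {i : ℕ} (hi : i ≤ N) : 0 ≤ sineMode N i := by
  refine sin_nonneg_of_nonneg_of_le_pi (by positivity) (div_le_of_le_mul₀ (by positivity) ?_ ?_)
  · exact pi_pos.le
  · gcongr

theorem sineMode_add_two_add (N i : ℕ) :
    sineMode N (i + 2) + sineMode N i = 2 * cos (π / N) * sineMode N (i + 1) := by
  have hnext : π * ((i + 2 : ℕ) : ℝ) / N = π * ((i + 1 : ℕ) : ℝ) / N + π / N := by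
    push_cast; ring
  have hprev : π * (i : ℝ) / N = π * ((i + 1 : ℕ) : ℝ) / N - π / N := by
    push_cast; ring
  rw [sineMode, sineMode, sineMode, hnext, hprev, sin_add, sin_sub]
  ring

theorem sineMode_reflect {i : ℕ} (hi : i ≤ N) : sineMode N (N - i) = sineMode N i := by
  rcases N.eq_zero_or_pos with rfl | hN
  · rw [Nat.le_zero.1 hi]
  rw [sineMode, sineMode, ← sin_pi_sub, Nat.cast_sub hi]
  congr 1
  field_simp
  ring

theorem sineMode_le_succ {i : ℕ} (hi : 2 * i + 1 ≤ N) : sineMode N i ≤ sineMode N (i + 1) := by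
  rcases hi.eq_or_lt with hi | hi
  · rw [← sineMode_reflect (i := i + 1) (by omega), show N - (i + 1) = i by omega]
  have hN : (0 : ℝ) < N := by exact_mod_cast (by omega : 0 < N)
  have hi' : 2 * ((i + 1 : ℕ) : ℝ) ≤ N := by exact_mod_cast hi
  refine sin_le_sin_of_le_of_le_pi_div_two ?_ ?_ ?_
  · exact (neg_nonpos.2 (by positivity)).trans (by positivity)
  · rw [div_le_iff₀ hN]
    nlinarith [pi_pos]
  · gcongr
    exact i.le_succ

theorem sineMode_add_two_sub_le {i : ℕ} (hi : i + 1 ≤ N) :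
    sineMode N (i + 2) - sineMode N (i + 1) ≤ sineMode N (i + 1) - sineMode N i := by
  have : 0 ≤ 2 * (1 - cos (π / N)) * sineMode N (i + 1) :=
    mul_nonneg (mul_nonneg zero_le_two (sub_nonneg.2 (cos_le_one _))) (sineMode_nonneg hi)
  linear_combination this + sineMode_add_two_add N i

end SineMode

section QuotientDerivative

variable {N : ℕ} {α a γ : ℝ} {u v F : ℕ → ℝ}

/-- `F` solves the equation satisfied by the discrete derivative of `v / u`, where `u` is a ground
state with affine coefficients and `v` an excited state at distance `γ` above it. -/
structure IsQuotientDerivative (N : ℕ) (α a γ : ℝ) (u F : ℕ → ℝ) : Prop extends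
    IsLinearGroundState N α a u where
  zero : F 0 = 0
  last : F N = 0
  pos_of_lt : ∀ i, 0 < i → i < N → 0 < F i
  derivative_step : ∀ i, i + 1 < N → ratio u (i + 2) * F (i + 2) + (ratio u i)⁻¹ * F i =
    (ratio u (i + 1) + (ratio u (i + 1))⁻¹ - γ) * F (i + 1)

/-- The contribution of the site `i + 1` to the defect of the sine mode in the equation for `F`,
after a summation by parts. -/
noncomputable def sineDefect (N : ℕ) (u F : ℕ → ℝ) (i : ℕ) : ℝ :=
  F (i + 1) * ((ratio u (i + 1) - 1) * (sineMode N (i + 1) - sineMode N i) +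
    (1 - (ratio u (i + 1))⁻¹) * (sineMode N (i + 2) - sineMode N (i + 1)))

namespace IsQuotientDerivative

section

variable (h : IsQuotientDerivative N α a γ u F)
include h

theorem apply_nonneg {i : ℕ} (hi : i ≤ N) : 0 ≤ F i := by
  rcases i.eq_zero_or_pos with rfl | hi₀
  · exact h.zero.ge
  rcases hi.eq_or_lt with rfl | hiN
  · exact h.last.ge
  · exact (h.pos_of_lt i hi₀ hiN).le

theorem derivative_step_reflect {i : ℕ} (hi : i + 2 ≤ N) :
    (ratio u (N - (i + 2)))⁻¹ * F (N - (i + 2)) + ratio u (N - i) * F (N - i) =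
      (ratio u (N - (i + 1)) + (ratio u (N - (i + 1)))⁻¹ - γ) * F (N - (i + 1)) := by
  have := h.derivative_step (N - (i + 2)) (by omega)
  rw [show N - (i + 2) + 2 = N - i by omega, show N - (i + 2) + 1 = N - (i + 1) by omega] at this
  rw [← this, add_comm]

theorem inv_ratio_mul_le_inv_ratio_succ_sq_mul {i : ℕ} (hi : 2 * i + 1 ≤ N) :
    (ratio u i)⁻¹ * F i ≤ (ratio u (i + 1))⁻¹ ^ 2 * (ratio u i * F i) := by
  have hr₀ := h.ratio_pos (show i ≤ N by omega)
  have hr₁ := h.ratio_pos (show i + 1 ≤ N by omega)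
  have hF := h.apply_nonneg (show i ≤ N by omega)
  calc (ratio u i)⁻¹ * F i = (ratio u i)⁻¹ ^ 2 * (ratio u i * F i) := by field_simp
    _ ≤ (ratio u (i + 1))⁻¹ ^ 2 * (ratio u i * F i) := by
      gcongr
      exact h.ratio_succ_le hi

theorem ratio_mul_ratio_reflect_le_one {i : ℕ} (hi : i ≤ N) : ratio u i * ratio u (N - i) ≤ 1 :=
  mul_le_one₀ (h.ratio_le_one hi) (h.ratio_pos (N.sub_le i)).le (h.ratio_le_one (N.sub_le i))

end

section

variable (h : IsQuotientDerivative N α a γ u F) (hγ : γ ≤ 2 * (1 - Real.cos (Real.pi / N)))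
include h hγ

theorem ratio_mul_mul_sineMode_le {i : ℕ} (hi : 2 * i + 1 ≤ N) :
    ratio u i * F i * sineMode N (i + 1) ≤ ratio u (i + 1) * F (i + 1) * sineMode N i := by
  induction i with
  | zero => simp [h.zero, sineMode_zero]
  | succ k ih =>
    have hind := ih (by omega)
    have hS := sineMode_add_two_add N k
    have hS₀₁ : sineMode N k ≤ sineMode N (k + 1) := sineMode_le_succ (by omega)
    have hS₁₂ : sineMode N (k + 1) ≤ sineMode N (k + 2) := sineMode_le_succ hi
    have hS₁ : 0 ≤ sineMode N (k + 1) := sineMode_nonneg (by omega)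
    set S₀ := sineMode N k
    set S₁ := sineMode N (k + 1)
    set S₂ := sineMode N (k + 2)
    set P := ratio u (k + 1) * F (k + 1)
    set b := (ratio u (k + 1))⁻¹
    have hr₁ := h.ratio_pos (show k + 1 ≤ N by omega)
    have hb : 1 ≤ b := (one_le_inv₀ hr₁).2 (h.ratio_le_one (by omega))
    have hP : 0 ≤ P := mul_nonneg hr₁.le (h.apply_nonneg (by omega))
    have hF : F (k + 1) = b * P := (inv_mul_cancel_left₀ hr₁.ne' _).symm
    have hprev : (ratio u k)⁻¹ * F k * S₁ ≤ b ^ 2 * (P * S₀) := by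
      calc (ratio u k)⁻¹ * F k * S₁ ≤ b ^ 2 * (ratio u k * F k) * S₁ := by
            exact mul_le_mul_of_nonneg_right
              (h.inv_ratio_mul_le_inv_ratio_succ_sq_mul (by omega)) hS₁
        _ ≤ b ^ 2 * (P * S₀) := by rw [mul_assoc]; gcongr
    have hnext : ratio u (k + 2) * F (k + 2) = P + b * (b * P) - γ * (b * P) -
        (ratio u k)⁻¹ * F k := by
      have := h.derivative_step k (by omega)
      rw [← hF]
      linear_combination this
    have hconvex : 0 ≤ P * (b - 1) * ((S₂ - S₁) + b * (S₁ - S₀)) := by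
      have := sub_nonneg.2 hb
      have := sub_nonneg.2 hS₀₁
      have := sub_nonneg.2 hS₁₂
      positivity
    have hgap : γ * (b * P * S₁) ≤ 2 * (1 - Real.cos (Real.pi / N)) * (b * P * S₁) := by gcongr
    rw [show k + 1 + 1 = k + 2 from rfl, hnext]
    linear_combination hprev + hconvex + hgap + b * P * hS

theorem ratio_mul_le_succ {i : ℕ} (hi : 2 * i + 1 ≤ N) :
    ratio u i * F i ≤ ratio u (i + 1) * F (i + 1) := by
  rcases i.eq_zero_or_pos with rfl | hi₀
  · rw [h.zero, mul_zero]
    exact mul_nonneg (h.ratio_pos (by omega)).le (h.apply_nonneg (by omega))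
  refine le_of_mul_le_mul_right ?_ (sineMode_pos hi₀ (show i < N by omega))
  have : 0 ≤ ratio u i * F i := mul_nonneg (h.ratio_pos (by omega)).le (h.apply_nonneg (by omega))
  calc ratio u i * F i * sineMode N i ≤ ratio u i * F i * sineMode N (i + 1) := by
        gcongr
        exact sineMode_le_succ hi
    _ ≤ _ := h.ratio_mul_mul_sineMode_le hγ hi

theorem inv_ratio_mul_le_succ {i : ℕ} (hi : 2 * i + 1 ≤ N) :
    (ratio u i)⁻¹ * F i ≤ (ratio u (i + 1))⁻¹ * F (i + 1) := by
  have hr₀ := h.ratio_pos (show i ≤ N by omega)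
  have hr₁ := h.ratio_pos (show i + 1 ≤ N by omega)
  have hF := h.apply_nonneg (show i + 1 ≤ N by omega)
  have hr := h.ratio_succ_le hi
  have : F i ≤ F (i + 1) := le_of_mul_le_mul_left
    ((h.ratio_mul_le_succ hγ hi).trans (mul_le_mul_of_nonneg_right hr hF)) hr₀
  exact mul_le_mul (inv_anti₀ hr₁ hr) this (h.apply_nonneg (by omega)) (by positivity)

theorem inv_ratio_reflect_sub_ratio_mul_le_succ {i : ℕ} (hi : 2 * i + 1 ≤ N) :
    ((ratio u (N - i))⁻¹ - ratio u i) * F i ≤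
      ((ratio u (N - (i + 1)))⁻¹ - ratio u (i + 1)) * F (i + 1) := by
  have split (j : ℕ) (hj : j ≤ N) : ((ratio u (N - j))⁻¹ - ratio u j) * F j =
      ((ratio u j * ratio u (N - j))⁻¹ - 1) * (ratio u j * F j) := by
    have := (h.ratio_pos hj).ne'
    have := (h.ratio_pos (N.sub_le j)).ne'
    field_simp
  have hpos (j : ℕ) (hj : j ≤ N) : 0 < ratio u j * ratio u (N - j) :=
    mul_pos (h.ratio_pos hj) (h.ratio_pos (N.sub_le j))
  have hone (j : ℕ) (hj : j ≤ N) : 1 ≤ (ratio u j * ratio u (N - j))⁻¹ :=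
    (one_le_inv₀ (hpos j hj)).2 (h.ratio_mul_ratio_reflect_le_one hj)
  rw [split i (by omega), split (i + 1) (by omega)]
  refine mul_le_mul (sub_le_sub_right ?_ 1) (h.ratio_mul_le_succ hγ hi) ?_ ?_
  · exact inv_anti₀ (hpos _ (by omega)) (h.ratio_mul_ratio_reflect_succ_le hi)
  · exact mul_nonneg (h.ratio_pos (by omega)).le (h.apply_nonneg (by omega))
  · exact sub_nonneg.2 (hone _ (by omega))

theorem inv_ratio_sub_ratio_reflect_mul_le_succ {i : ℕ} (hi : 2 * i + 1 ≤ N) :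
    ((ratio u i)⁻¹ - ratio u (N - i)) * F i ≤
      ((ratio u (i + 1))⁻¹ - ratio u (N - (i + 1))) * F (i + 1) := by
  have split (j : ℕ) (hj : j ≤ N) : ((ratio u j)⁻¹ - ratio u (N - j)) * F j =
      (1 - ratio u j * ratio u (N - j)) * ((ratio u j)⁻¹ * F j) := by
    have := (h.ratio_pos hj).ne'
    field_simp
  rw [split i (by omega), split (i + 1) (by omega)]
  refine mul_le_mul (sub_le_sub_left (h.ratio_mul_ratio_reflect_succ_le hi) 1)
    (h.inv_ratio_mul_le_succ hγ hi) ?_ ?_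
  · exact mul_nonneg (inv_nonneg.2 (h.ratio_pos (by omega)).le) (h.apply_nonneg (by omega))
  · exact sub_nonneg.2 (h.ratio_mul_ratio_reflect_le_one (by omega))

/-- On the left half, `F` is a supersolution of the equation satisfied by its reflection. -/
theorem mul_le_of_reflect {i : ℕ} (hi : 2 * (i + 1) + 1 ≤ N) :
    (ratio u (N - (i + 1)) + (ratio u (N - (i + 1)))⁻¹ - γ) * F (i + 1) ≤
      (ratio u (N - (i + 2)))⁻¹ * F (i + 2) + ratio u (N - i) * F i := by
  linear_combination h.inv_ratio_reflect_sub_ratio_mul_le_succ hγ (i := i + 1) hi +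
    h.inv_ratio_sub_ratio_reflect_mul_le_succ hγ (i := i) (by omega) -
    h.derivative_step i (by omega)

theorem reflect_mul_le {i : ℕ} (hi : 2 * i + 1 ≤ N) :
    F (N - (i + 1)) * F i ≤ F (i + 1) * F (N - i) := by
  induction i with
  | zero => simp [h.zero, h.last]
  | succ k ih =>
    have hk := ih (by omega)
    have super := h.mul_le_of_reflect hγ hi
    have reflected := h.derivative_step_reflect (i := k) (by omega)
    have hr := h.ratio_pos (N.sub_le k)
    have hr₂ := inv_pos.2 (h.ratio_pos (N.sub_le (k + 2)))
    have hF := h.apply_nonneg (N.sub_le (k + 1))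
    refine le_of_mul_le_mul_left ?_ hr₂
    linear_combination mul_le_mul_of_nonneg_right super hF + F (k + 1) * reflected +
      mul_le_mul_of_nonneg_left hk hr.le

theorem le_reflect {i : ℕ} (hi : 2 * i ≤ N) : F i ≤ F (N - i) := by
  have hi : i ≤ N / 2 := by omega
  induction hi using Nat.decreasingInduction with
  | self =>
    rcases Nat.even_or_odd' N with ⟨k, rfl | rfl⟩
    · rw [show 2 * k - 2 * k / 2 = 2 * k / 2 by omega]
    · have := h.reflect_mul_le hγ (i := k) le_rfl
      rw [show 2 * k + 1 - (k + 1) = k by omega, show 2 * k + 1 - k = k + 1 by omega] at this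
      rw [show (2 * k + 1) / 2 = k by omega, show 2 * k + 1 - k = k + 1 by omega]
      exact (mul_self_le_mul_self_iff (h.apply_nonneg (by omega)) (h.apply_nonneg (by omega))).2 <|
        this
  | of_succ k hk ih =>
    have hk₀ := h.apply_nonneg (show k ≤ N by omega)
    refine le_of_mul_le_mul_left ?_ (h.pos_of_lt (k + 1) (by omega) (by omega))
    exact (mul_le_mul_of_nonneg_right (ih (by omega)) hk₀).trans (h.reflect_mul_le hγ (by omega))

theorem sineDefect_add_reflect_nonneg {i j : ℕ} (hij : i + j + 2 = N) :
    0 ≤ sineDefect N u F i + sineDefect N u F j := by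
  wlog hle : i ≤ j generalizing i j
  · rw [add_comm]
    exact this (by omega) (by omega)
  have hj : N - (i + 1) = j + 1 := by omega
  have hF := h.le_reflect hγ (i := i + 1) (by omega)
  have hr := h.ratio_reflect_le (i := i + 1) (by omega)
  rw [hj] at hF hr
  have hS₁ : sineMode N (j + 1) = sineMode N (i + 1) := by rw [← hj, sineMode_reflect (by omega)]
  have hS₀ : sineMode N j = sineMode N (i + 2) := by
    rw [← sineMode_reflect (show i + 2 ≤ N by omega), show N - (i + 2) = j by omega]
  have hS₂ : sineMode N (j + 2) = sineMode N i := by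
    rw [← sineMode_reflect (show i ≤ N by omega), show N - i = j + 2 by omega]
  have hr_pos := h.ratio_pos (show i + 1 ≤ N by omega)
  have hr_one := h.ratio_le_one (show i + 1 ≤ N by omega)
  have hs_pos := h.ratio_pos (show j + 1 ≤ N by omega)
  have hF_nonneg := h.apply_nonneg (show i + 1 ≤ N by omega)
  rw [sineDefect, sineDefect, hS₀, hS₁, hS₂]
  set c := sineMode N (i + 1) - sineMode N i
  set d := sineMode N (i + 2) - sineMode N (i + 1)
  have hc_nonneg : 0 ≤ c := sub_nonneg.2 (sineMode_le_succ (by omega))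
  have hdc : 0 ≤ c - d := sub_nonneg.2 (sineMode_add_two_sub_le (by omega))
  have hinv : 0 ≤ (ratio u (i + 1))⁻¹ - 1 := sub_nonneg.2 ((one_le_inv₀ hr_pos).2 hr_one)
  have right_dominates :
      F (i + 1) * ((1 - ratio u (i + 1)) * d + ((ratio u (i + 1))⁻¹ - 1) * c) ≤
        F (j + 1) * ((1 - ratio u (j + 1)) * d + ((ratio u (j + 1))⁻¹ - 1) * c) := by
    rcases hle.eq_or_lt with rfl | hlt
    · rfl
    have hd_nonneg : 0 ≤ d := sub_nonneg.2 (sineMode_le_succ (by omega))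
    have := sub_nonneg.2 hr_one
    have := hF_nonneg.trans hF
    gcongr
  have hdiff : 0 ≤ F (i + 1) * ((c - d) * (ratio u (i + 1) + (ratio u (i + 1))⁻¹ - 2)) :=
    mul_nonneg hF_nonneg (mul_nonneg hdc (sub_nonneg.2 (two_le_add_inv hr_pos)))
  linear_combination right_dominates + hdiff

end

theorem sum_sineDefect (h : IsQuotientDerivative N α a γ u F) {k : ℕ} (hk : k + 1 ≤ N) :
    ∑ i ∈ Finset.range k, sineDefect N u F i =
      (γ - 2 * (1 - Real.cos (Real.pi / N))) *
        ∑ i ∈ Finset.range k, sineMode N (i + 1) * F (i + 1) +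
      sineMode N k * (ratio u (k + 1) * F (k + 1)) -
      sineMode N (k + 1) * ((ratio u k)⁻¹ * F k) := by
  induction k with
  | zero => simp [sineMode_zero, h.zero]
  | succ k ih =>
    rw [Finset.sum_range_succ, Finset.sum_range_succ, ih (by omega), sineDefect]
    linear_combination F (k + 1) * sineMode_add_two_add N k -
      sineMode N (k + 1) * h.derivative_step k (by omega)

theorem two_mul_one_sub_cos_le (h : IsQuotientDerivative N α a γ u F) (hN : 2 ≤ N) :
    2 * (1 - Real.cos (Real.pi / N)) ≤ γ := by
  by_contra! hγ
  obtain ⟨n, rfl⟩ : ∃ n, N = n + 2 := ⟨N - 2, by omega⟩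
  have hdefect : 0 ≤ ∑ i ∈ Finset.range (n + 1), sineDefect (n + 2) u F i := by
    have pairs := Finset.sum_nonneg fun i (hi : i ∈ Finset.range (n + 1)) =>
      h.sineDefect_add_reflect_nonneg hγ.le (i := i) (j := n + 1 - 1 - i)
        (by have := Finset.mem_range.1 hi; omega)
    rw [Finset.sum_add_distrib, Finset.sum_range_reflect] at pairs
    linarith
  have hpos : 0 < ∑ i ∈ Finset.range (n + 1), sineMode (n + 2) (i + 1) * F (i + 1) := by
    refine Finset.sum_pos (fun i hi => ?_) ⟨0, by simp⟩
    have hi := Finset.mem_range.1 hi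
    exact mul_pos (sineMode_pos (by omega) (by omega)) (h.pos_of_lt _ (by omega) (by omega))
  have hsum := h.sum_sineDefect (k := n + 1) le_rfl
  rw [h.last, sineMode_self (by omega), mul_zero, mul_zero, zero_mul, add_zero, sub_zero] at hsum
  exact hdefect.not_gt (hsum ▸ mul_neg_of_neg_of_pos (sub_neg.2 hγ) hpos)

end IsQuotientDerivative

variable {q x : ℕ → ℝ}

theorem IsGroundExcitedPair.isQuotientDerivative
    (h : IsGroundExcitedPair N (fun i => α + a * i) γ u v) (ha : 0 ≤ a) :
    IsQuotientDerivative N α a γ u fun i => wronskian u v i / (u i * u (i + 1)) where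
  toIsNeumannSolution := h.ground
  pos := h.pos
  slope_nonneg := ha
  zero := by rw [h.ground.wronskian_zero h.excited, zero_div]
  last := by rw [h.ground.wronskian_last h.excited, zero_div]
  pos_of_lt i hi₀ hiN := div_pos (h.wronskian_pos i hi₀ hiN)
    (mul_pos (h.pos i (by omega)) (h.pos (i + 1) (by omega)))
  derivative_step i hi := by
    have h₀ := (h.pos i (by omega)).ne'
    have h₁ := (h.pos (i + 1) (by omega)).ne'
    have h₂ := (h.pos (i + 2) (by omega)).ne'
    have h₃ := (h.pos (i + 3) (by omega)).ne'
    have hprev := h.ground.wronskian_succ h.excited (show i < N by omega)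
    have hnext := h.ground.wronskian_succ h.excited hi
    have hw : wronskian u v (i + 1) = u (i + 1) * v (i + 2) - u (i + 2) * v (i + 1) := rfl
    simp only [ratio]
    field_simp
    linear_combination u (i + 1) ^ 2 * hnext - u (i + 2) ^ 2 * hprev +
      γ * u (i + 1) * u (i + 2) * hw

theorem IsNeumannSolution.reflect (h : IsNeumannSolution N q x) :
    IsNeumannSolution N (fun i => q (N + 1 - i)) fun i => x (N + 1 - i) where
  left := h.right
  right := by simpa using h.left
  step i hi := by
    have := h.step (N - (i + 1)) (by omega)
    rw [show N - (i + 1) + 2 = N + 1 - i by omega, show N - (i + 1) + 1 = N + 1 - (i + 1) by omega,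
      show N - (i + 1) = N + 1 - (i + 2) by omega] at this
    rw [← this, add_comm]

theorem IsNeumannSolution.neg (h : IsNeumannSolution N q x) : IsNeumannSolution N q (-x) where
  left := congrArg Neg.neg h.left
  right := congrArg Neg.neg h.right
  step i hi := by
    simp only [Pi.neg_apply]
    linear_combination -h.step i hi

theorem IsGroundExcitedPair.reflect (h : IsGroundExcitedPair N q γ u v) :
    IsGroundExcitedPair N (fun i => q (N + 1 - i)) γ (fun i => u (N + 1 - i))
      fun i => -v (N + 1 - i) where
  ground := h.ground.reflect
  excited := h.excited.reflect.neg
  gap_pos := h.gap_pos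
  pos i _ := h.pos _ (Nat.sub_le _ _)
  wronskian_pos i hi₀ hiN := by
    have := h.wronskian_pos (N - i) (by omega) (by omega)
    rw [wronskian, show N - i + 1 = N + 1 - i by omega] at this
    rw [wronskian, show N + 1 - (i + 1) = N - i by omega]
    linarith

theorem IsGroundExcitedPair.two_mul_one_sub_cos_le
    (h : IsGroundExcitedPair N (fun i => α + a * i) γ u v) (hN : 2 ≤ N) :
    2 * (1 - Real.cos (Real.pi / N)) ≤ γ := by
  rcases le_total 0 a with ha | ha
  · exact (h.isQuotientDerivative ha).two_mul_one_sub_cos_le hN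
  · have h' : IsGroundExcitedPair N (fun i => (α + a * (N + 1)) + -a * i) γ _ _ :=
      h.reflect.congr fun i hi => by
        rw [Nat.cast_sub (by omega)]
        push_cast
        ring
    exact (h'.isQuotientDerivative (neg_nonneg.2 ha)).two_mul_one_sub_cos_le hN

end QuotientDerivative

section Chord

open Set

variable {D W f : ℕ → ℝ}

theorem mul_sub_le_of_monotone_sub (hD : Monotone fun i => D (i + 1) - D i) (m n : ℕ) :
    ((n : ℝ) - m) * (D (m + 1) - D m) ≤ D n - D m := by
  rcases le_total m n with hmn | hnm
  · induction n, hmn using Nat.le_induction with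
    | base => simp
    | succ n hmn ih =>
      have : D (m + 1) - D m ≤ D (n + 1) - D n := hD hmn
      push_cast
      linarith
  · induction hnm using Nat.decreasingInduction with
    | self => simp
    | of_succ n hnm ih =>
      have : D (n + 1) - D n ≤ D (m + 1) - D m := hD hnm.le
      push_cast at ih
      linarith

theorem mul_sub_le_mul_sub_of_monotone_sub (hD : Monotone fun i => D (i + 1) - D i) {i j k : ℕ}
    (hij : i ≤ j) (hjk : j ≤ k) :
    ((k : ℝ) - j) * (D j - D i) ≤ ((j : ℝ) - i) * (D k - D j) := by
  have hij' : (0 : ℝ) ≤ j - i := sub_nonneg.2 (by exact_mod_cast hij)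
  have hjk' : (0 : ℝ) ≤ k - j := sub_nonneg.2 (by exact_mod_cast hjk)
  linear_combination mul_le_mul_of_nonneg_left (mul_sub_le_of_monotone_sub hD j i) hjk' +
    mul_le_mul_of_nonneg_left (mul_sub_le_of_monotone_sub hD j k) hij'

theorem nonneg_or_nonpos_of_monotone_sub (hD : Monotone fun i => D (i + 1) - D i) {k m : ℕ}
    (hkm : k < m) (hk : D k = 0) (hm : D m = 0) (i : ℕ) :
    0 ≤ D i ∧ (i ≤ k ∨ m ≤ i) ∨ D i ≤ 0 ∧ k ≤ i ∧ i ≤ m := by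
  have hkm' : (0 : ℝ) < m - k := sub_pos.2 (by exact_mod_cast hkm)
  rcases le_total i k with hik | hki
  · have := mul_sub_le_mul_sub_of_monotone_sub hD hik hkm.le
    rw [hk, hm] at this
    exact .inl ⟨by nlinarith, .inl hik⟩
  rcases le_total i m with him | hmi
  · have := mul_sub_le_mul_sub_of_monotone_sub hD hki him
    rw [hk, hm] at this
    exact .inr ⟨by nlinarith, hki, him⟩
  · have := mul_sub_le_mul_sub_of_monotone_sub hD hkm.le hmi
    rw [hk, hm] at this
    exact .inl ⟨by nlinarith, .inr hmi⟩

theorem exists_threshold_of_strictMonoOn {a b : ℕ} (hab : a ≤ b) (hf : StrictMonoOn f (Icc a b))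
    (c : ℝ) : ∃ k ∈ Icc a b, (∀ i ∈ Ico a k, f i < c) ∧ ∀ i ∈ Ioc k b, c < f i := by
  induction b, hab using Nat.le_induction with
  | base => exact ⟨a, by simp, by simp, by simp⟩
  | succ b hab ih =>
    obtain ⟨k, hk, hlow, hhigh⟩ := ih (hf.mono (Icc_subset_Icc_right b.le_succ))
    by_cases hc : c < f (b + 1)
    · refine ⟨k, Icc_subset_Icc_right b.le_succ hk, hlow, fun i hi => ?_⟩
      rcases hi.2.eq_or_lt with rfl | hib
      · exact hc
      · exact hhigh i ⟨hi.1, Nat.lt_succ_iff.1 hib⟩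
    · refine ⟨b + 1, right_mem_Icc.2 (by omega), fun i hi => ?_, by simp⟩
      exact (hf ⟨hi.1, hi.2.le⟩ (right_mem_Icc.2 (by omega)) hi.2).trans_le (not_lt.1 hc)

theorem abs_sub_le_of_abs_succ_sub_le {M : ℝ} (hM : ∀ i, |W (i + 1) - W i| ≤ M) {k m : ℕ}
    (hkm : k ≤ m) : |W m - W k| ≤ M * (m - k) := by
  have := dist_le_Ico_sum_of_dist_le (f := W) (d := fun _ => M) hkm fun _ _ => by
    rw [dist_comm, Real.dist_eq]
    exact hM _
  rwa [Finset.sum_const, Nat.card_Ico, nsmul_eq_mul, Nat.cast_sub hkm, mul_comm, dist_comm,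
    Real.dist_eq] at this

/-- The line is the chord of `W` between the two sites where `f` crosses the levels `-1` and `1`. -/
theorem exists_line_eq_or_pos_mul {N : ℕ} {M : ℝ} (hN : 2 ≤ N)
    (hW : Monotone fun i => W (i + 1) - W i) (hM : ∀ i, |W (i + 1) - W i| ≤ M)
    (hf : StrictMonoOn f (Icc 1 N)) (hfN : -1 < f N) :
    ∃ s c : ℝ, |s| ≤ M ∧
      ∀ i ∈ Icc 1 N, W i = s * i + c ∨ 0 < (W i - (s * i + c)) * (f i ^ 2 - 1) := by
  obtain ⟨k, ⟨hk₁, hkN⟩, below, above⟩ := exists_threshold_of_strictMonoOn (show 1 ≤ N - 1 by omega)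
    (hf.mono (Icc_subset_Icc_right (by omega))) (-1)
  obtain ⟨m, ⟨hkm, hmN⟩, below', above'⟩ := exists_threshold_of_strictMonoOn
    (show k + 1 ≤ N by omega) (hf.mono (Icc_subset_Icc_left (by omega))) 1
  have hkm' : (0 : ℝ) < m - k := sub_pos.2 (by exact_mod_cast hkm)
  set s := (W m - W k) / (m - k) with hs
  set D : ℕ → ℝ := fun i => W i - (s * i + (W k - s * k)) with hD
  have hDmono : Monotone fun i => D (i + 1) - D i := by
    convert hW.add_const (-s) using 2
    simp only [hD]
    push_cast
    ring
  have hDk : D k = 0 := by simp only [hD]; ring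
  have hDm : D m = 0 := by simp only [hD, hs]; field_simp; ring
  refine ⟨s, W k - s * k, ?_, fun i hi => or_iff_not_imp_left.2 fun hne => ?_⟩
  · rw [hs, abs_div, abs_of_pos hkm', div_le_iff₀ hkm']
    exact abs_sub_le_of_abs_succ_sub_le hM (by omega)
  have hDi : D i ≠ 0 := sub_ne_zero.2 hne
  have hik : i ≠ k := fun h => hDi (h ▸ hDk)
  have him : i ≠ m := fun h => hDi (h ▸ hDm)
  rcases nonneg_or_nonpos_of_monotone_sub hDmono hkm hDk hDm i with ⟨hpos, hout⟩ | ⟨hneg, hin⟩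
  · refine mul_pos (hpos.lt_of_ne' hDi) (sub_pos.2 (one_lt_sq_iff_one_lt_abs _ |>.2 ?_))
    rcases hout with hout | hout
    · exact lt_abs.2 (.inr (lt_neg_of_lt_neg (below i ⟨hi.1, by omega⟩)))
    · exact lt_abs.2 (.inl (above' i ⟨by omega, hi.2⟩))
  · refine mul_pos_of_neg_of_neg (hneg.lt_of_ne hDi) <|
      sub_neg.2 ((sq_lt_one_iff_abs_lt_one _).2 ?_)
    refine abs_lt.2 ⟨?_, below' i ⟨by omega, by omega⟩⟩
    rcases hi.2.eq_or_lt with rfl | hiN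
    · exact hfN
    · exact above i ⟨by omega, by omega⟩

end Chord

section Compactness

open Matrix Set Filter Topology
open scoped Matrix.Norms.L2Operator

/-- Convex potentials with slopes bounded by `M`, defined on all of `ℕ` so that convexity and the
slope bound are closed conditions on every bond. The normalisation at `0` makes the set compact. -/
def convexPotentials (b M : ℝ) : Set (ℕ → ℝ) :=
  {W | W 0 = b ∧ (Monotone fun i => W (i + 1) - W i) ∧ ∀ i, |W (i + 1) - W i| ≤ M}

variable {b s M : ℝ}

theorem line_mem_convexPotentials (hs : |s| ≤ M) :
    (fun i : ℕ => b + s * i) ∈ convexPotentials b M := by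
  have slope (i : ℕ) : b + s * (i + 1 : ℕ) - (b + s * i) = s := by
    push_cast
    ring
  refine ⟨by simp, ?_, fun i => ?_⟩
  · simpa only [slope] using monotone_const
  · rwa [slope]

theorem convex_convexPotentials (b M : ℝ) : Convex ℝ (convexPotentials b M) := by
  rintro V ⟨hV₀, hV, hVM⟩ W ⟨hW₀, hW, hWM⟩ p q hp hq hpq
  have slope (i : ℕ) : (p • V + q • W) (i + 1) - (p • V + q • W) i =
      p * (V (i + 1) - V i) + q * (W (i + 1) - W i) := by
    simp only [Pi.add_apply, Pi.smul_apply, smul_eq_mul]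
    ring
  refine ⟨?_, ?_, fun i => ?_⟩
  · simp [hV₀, hW₀, ← add_mul, hpq]
  · simp only [slope]
    exact (hV.const_mul hp).add (hW.const_mul hq)
  · rw [slope, ← Real.norm_eq_abs]
    simpa using convex_closedBall (0 : ℝ) M (by simpa using hVM i) (by simpa using hWM i) hp hq hpq

theorem isClosed_convexPotentials (b M : ℝ) : IsClosed (convexPotentials b M) := by
  simp only [convexPotentials, ofPred_and, ofPred_forall]
  refine (isClosed_eq (by fun_prop) continuous_const).inter <| .inter ?_ <|
    isClosed_iInter fun i => isClosed_le (by fun_prop) continuous_const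
  exact isClosed_monotone.preimage (f := fun W : ℕ → ℝ => fun i => W (i + 1) - W i) (by fun_prop)

theorem isCompact_convexPotentials (b M : ℝ) : IsCompact (convexPotentials b M) := by
  refine (isCompact_univ_pi fun i : ℕ => isCompact_closedBall b (M * i)).of_isClosed_subset
    (isClosed_convexPotentials b M) fun W ⟨hW₀, _, hWM⟩ i _ => ?_
  simpa [Real.dist_eq, hW₀] using abs_sub_le_of_abs_succ_sub_le hWM i.zero_le

theorem exists_gap_le_of_isCompact {n X : Type*} [Fintype n] [Nontrivial n] [TopologicalSpace X]
    {A : X → Matrix n n ℝ} (hA : ∀ x, (A x).IsSymm) (hcont : Continuous A)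
    {K : Set X} (hK : IsCompact K) (hne : K.Nonempty) :
    ∃ x₀ ∈ K, ∀ x ∈ K, ∀ l₁ l₂ u v m₁ m₂ u' v', IsLowestPair (A x₀) l₁ l₂ u v →
      IsLowestPair (A x) m₁ m₂ u' v' → l₂ - l₁ ≤ m₂ - m₁ := by
  classical
  choose e₁ e₂ w₁ w₂ he using fun x => exists_isLowestPair (hA x)
  have dist_gap_le (x y : X) : dist (e₂ y - e₁ y) (e₂ x - e₁ x) ≤ 4 * ‖A y - A x‖ := by
    have hxy := (he x).gap_le_gap_add_norm (he y) (hA x) (hA y)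
    have hyx := (he y).gap_le_gap_add_norm (he x) (hA y) (hA x)
    rw [norm_sub_rev] at hyx
    exact abs_sub_le_iff.2 ⟨by linarith, by linarith⟩
  have gap_cont : Continuous fun x => e₂ x - e₁ x := by
    refine continuous_iff_continuousAt.2 fun x => tendsto_iff_dist_tendsto_zero.2 <|
      squeeze_zero (fun _ => dist_nonneg) (dist_gap_le x) ?_
    exact Continuous.tendsto' (by fun_prop) _ _ (by simp)
  have gap_eq {x : X} {l₁ l₂ : ℝ} {u v : n → ℝ} (h : IsLowestPair (A x) l₁ l₂ u v) :
      l₂ - l₁ = e₂ x - e₁ x := by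
    have hle := (he x).gap_le_gap_add_norm h (hA x) (hA x)
    have hge := h.gap_le_gap_add_norm (he x) (hA x) (hA x)
    rw [sub_self, norm_zero] at hle hge
    linarith
  obtain ⟨x₀, hx₀, hmin⟩ := hK.exists_isMinOn hne gap_cont.continuousOn
  refine ⟨x₀, hx₀, fun x hx l₁ l₂ u v m₁ m₂ u' v' h h' => ?_⟩
  rw [gap_eq h, gap_eq h']
  exact hmin hx

theorem continuous_pathH (N : ℕ) : Continuous (pathH N) := by
  refine continuous_matrix fun i j => ?_
  simp only [pathH, of_apply]
  split_ifs <;> fun_prop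

end Compactness

section Minimizer

open Matrix Set

variable {N : ℕ} {W V q u v : ℕ → ℝ} {γ M b : ℝ}

theorem pathH_congr (h : ∀ i ∈ Icc 1 N, W i = V i) : pathH N W = pathH N V := by
  ext i j
  simp only [pathH, of_apply, h (i + 1) ⟨by omega, i.is_lt⟩]

theorem pathH_add (N : ℕ) (W V : ℕ → ℝ) :
    pathH N (W + V) = pathH N W + diagonal (siteValues N V) := by
  ext i j
  rcases eq_or_ne i j with rfl | hij
  · simp [pathH, siteValues, add_assoc]
  · simp [pathH, hij]

theorem siteValues_dotProduct_siteValues (N : ℕ) (x y : ℕ → ℝ) :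
    siteValues N x ⬝ᵥ siteValues N y = ∑ i ∈ Finset.Icc 1 N, x i * y i := by
  rw [← Finset.Ico_succ_right_eq_Icc, Finset.sum_Ico_eq_sum_range, Order.succ_eq_add_one,
    Nat.add_sub_cancel, Finset.sum_range]
  simp only [dotProduct, siteValues, add_comm]

theorem siteValues_dotProduct_diagonal_mulVec (N : ℕ) (d x : ℕ → ℝ) :
    siteValues N x ⬝ᵥ diagonal (siteValues N d) *ᵥ siteValues N x =
      ∑ i ∈ Finset.Icc 1 N, d i * x i ^ 2 := by
  have : diagonal (siteValues N d) *ᵥ siteValues N x = siteValues N (d * x) := by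
    ext i
    simp [mulVec_diagonal, siteValues]
  rw [this, siteValues_dotProduct_siteValues]
  exact Finset.sum_congr rfl fun i _ => by simp only [Pi.mul_apply]; ring

theorem IsGroundExcitedPair.strictMonoOn_div (h : IsGroundExcitedPair N q γ u v) :
    StrictMonoOn (fun i => v i / u i) (Icc 1 N) := by
  refine strictMonoOn_of_lt_succ ordConnected_Icc fun i _ hi hi' => ?_
  rw [Nat.succ_eq_succ] at *
  have := h.wronskian_pos i hi.1 hi'.2
  rw [div_lt_div_iff₀ (h.pos _ (by grind)) (h.pos _ (by grind))]
  rw [wronskian] at this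
  linarith

theorem IsGroundExcitedPair.exists_eq_line (h : IsGroundExcitedPair N q γ u v) (hN : 2 ≤ N)
    (hW : W ∈ convexPotentials b M)
    (hnorm : ∑ i ∈ Finset.Icc 1 N, (v i ^ 2 - u i ^ 2) = 0)
    (hle : ∀ s, |s| ≤ M → ∑ i ∈ Finset.Icc 1 N, (W i - s * i) * (v i ^ 2 - u i ^ 2) ≤ 0) :
    ∃ s c, ∀ i ∈ Icc 1 N, W i = s * i + c := by
  have last_pos : 0 < v N / u N := div_pos (h.excited_last_pos hN) (h.pos N (by omega))
  obtain ⟨s, c, hs, hline⟩ := exists_line_eq_or_pos_mul hN hW.2.1 hW.2.2 h.strictMonoOn_div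
    (neg_one_lt_zero.trans last_pos)
  set t : ℕ → ℝ := fun i => (W i - (s * i + c)) * (v i ^ 2 - u i ^ 2) with ht
  have term_nonneg : ∀ i ∈ Finset.Icc 1 N, W i = s * i + c ∨ 0 < t i := by
    intro i hi
    have hi := Finset.mem_Icc.1 hi
    have hu := h.pos i (by omega)
    refine (hline i hi).imp_right fun hpos => ?_
    have : t i = (W i - (s * i + c)) * ((v i / u i) ^ 2 - 1) * u i ^ 2 := by
      simp only [ht]
      field_simp
    exact this ▸ mul_pos hpos (pow_pos hu 2)
  have sum_nonpos : ∑ i ∈ Finset.Icc 1 N, t i ≤ 0 := by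
    have : ∑ i ∈ Finset.Icc 1 N, t i =
        ∑ i ∈ Finset.Icc 1 N, (W i - s * i) * (v i ^ 2 - u i ^ 2) -
          c * ∑ i ∈ Finset.Icc 1 N, (v i ^ 2 - u i ^ 2) := by
      rw [Finset.mul_sum, ← Finset.sum_sub_distrib]
      exact Finset.sum_congr rfl fun i _ => by ring
    rw [this, hnorm, mul_zero, sub_zero]
    exact hle s hs
  refine ⟨s, c, fun i hi => by_contra fun hne => sum_nonpos.not_gt ?_⟩
  have hi := Finset.mem_Icc.2 hi
  refine Finset.sum_pos' (fun j hj => ?_) ⟨i, hi, (term_nonneg i hi).resolve_left hne⟩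
  rcases term_nonneg j hj with hj | hj
  · simp [ht, hj]
  · exact hj.le

theorem IsLowestPair.sum_sub_mul_sq_le [Nontrivial (Fin N)] {K : Set (ℕ → ℝ)} {L : ℕ → ℝ}
    {l₁ l₂ : ℝ} (h : IsLowestPair (pathH N V) l₁ l₂ (siteValues N u) (siteValues N v))
    (hl : l₁ < l₂) (hK : Convex ℝ K) (hV : V ∈ K) (hL : L ∈ K)
    (hmin : ∀ W ∈ K, ∀ m₁ m₂ x y, IsLowestPair (pathH N W) m₁ m₂ x y → l₂ - l₁ ≤ m₂ - m₁) :
    ∑ i ∈ Finset.Icc 1 N, (L i - V i) * u i ^ 2 ≤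
      ∑ i ∈ Finset.Icc 1 N, (L i - V i) * v i ^ 2 := by
  have isSymm (W : ℕ → ℝ) : (pathH N W).IsSymm := (pathH_isSchrodinger N W).isSymm
  have hvar := h.dotProduct_mulVec_fst_le_snd (isSymm V) (isSymm_diagonal (siteValues N (L - V))) hl
    fun t ht => by
      have hmem := hK.add_smul_sub_mem hV hL ⟨ht.1.le, ht.2⟩
      obtain ⟨m₁, m₂, x, y, hlow⟩ := exists_isLowestPair (isSymm (V + t • (L - V)))
      have hgap := hmin _ hmem _ _ _ _ hlow
      rw [pathH_add] at hlow
      rw [← diagonal_smul]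
      exact ⟨m₁, m₂, x, y, hlow, hgap⟩
  simpa only [siteValues_dotProduct_diagonal_mulVec, Pi.sub_apply] using hvar

theorem exists_isGroundExcitedPair_line_le (hN : 2 ≤ N) (hW : W ∈ convexPotentials b M) {l₁ l₂ : ℝ}
    {x y : Fin N → ℝ} (h : IsLowestPair (pathH N W) l₁ l₂ x y) :
    ∃ α a γ u v, IsGroundExcitedPair N (fun i => α + a * i) γ u v ∧ γ ≤ l₂ - l₁ := by
  have : Nontrivial (Fin N) := Fin.nontrivial_iff_two_le.2 hN
  obtain ⟨V, hV, hmin⟩ := exists_gap_le_of_isCompact (fun V => (pathH_isSchrodinger N V).isSymm)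
    (continuous_pathH N) (isCompact_convexPotentials b M) ⟨W, hW⟩
  obtain ⟨m₁, m₂, u, v, hlow, hpair⟩ := exists_isGroundExcitedPair hN V
  have hnorm : ∑ i ∈ Finset.Icc 1 N, (v i ^ 2 - u i ^ 2) = 0 := by
    simp only [Finset.sum_sub_distrib, sq, ← siteValues_dotProduct_siteValues,
      hlow.dotProduct_fst, hlow.dotProduct_snd, sub_self]
  have hvar : ∀ s, |s| ≤ M → ∑ i ∈ Finset.Icc 1 N, (V i - s * i) * (v i ^ 2 - u i ^ 2) ≤ 0 := by
    intro s hs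
    have hle := hlow.sum_sub_mul_sq_le (sub_pos.1 hpair.gap_pos) (convex_convexPotentials b M) hV
      (line_mem_convexPotentials hs) fun W hW _ _ _ _ => hmin W hW _ _ _ _ _ _ _ _ hlow
    have hb : ∑ i ∈ Finset.Icc 1 N, b * (v i ^ 2 - u i ^ 2) = 0 := by
      rw [← Finset.mul_sum, hnorm, mul_zero]
    rw [← sub_nonpos, ← Finset.sum_sub_distrib] at hle
    rw [← hb, ← sub_nonpos, ← Finset.sum_sub_distrib]
    refine (Finset.sum_congr rfl fun i _ => ?_).trans_le hle
    ring
  obtain ⟨s, c, hline⟩ := hpair.exists_eq_line hN hV hnorm hvar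
  refine ⟨2 + c - m₁, s, m₂ - m₁, u, v, hpair.congr fun i hi => ?_,
    hmin W hW _ _ _ _ _ _ _ _ hlow h⟩
  rw [hline (i + 1) ⟨by omega, hi⟩]
  ring

theorem exists_mem_convexPotentials_eqOn (hN : 2 ≤ N)
    (hW : ∀ i, 2 ≤ i → i < N → 0 ≤ W (i - 1) - 2 * W i + W (i + 1)) :
    ∃ b M, ∃ V ∈ convexPotentials b M, EqOn W V (Icc 1 N) := by
  set σ : ℕ → ℝ := fun i => W (max 1 (min i (N - 1)) + 1) - W (max 1 (min i (N - 1))) with hσ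
  set V : ℕ → ℝ := fun i => W 1 - σ 0 + ∑ k ∈ Finset.range i, σ k with hV
  have slope (i : ℕ) : V (i + 1) - V i = σ i := by
    simp only [hV, Finset.sum_range_succ]
    ring
  have σ_mono : Monotone σ := by
    refine monotone_nat_of_le_succ fun i => ?_
    by_cases hi : 1 ≤ i ∧ i + 1 < N
    · have := hW (i + 1) (by omega) hi.2
      simp only [hσ, show max 1 (min i (N - 1)) = i by omega,
        show max 1 (min (i + 1) (N - 1)) = i + 1 by omega]
      rw [Nat.add_sub_cancel] at this
      linarith
    · simp only [hσ, show max 1 (min i (N - 1)) = max 1 (min (i + 1) (N - 1)) by omega, le_refl]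
  have σ_le (i : ℕ) : σ i ≤ σ N := by
    have : σ i = σ (min i N) := by
      simp only [hσ, show min (min i N) (N - 1) = min i (N - 1) by omega]
    exact this ▸ σ_mono (min_le_right i N)
  refine ⟨V 0, max |σ 0| |σ N|, V, ⟨rfl, by simpa only [slope], fun i => ?_⟩, fun i hi => ?_⟩
  · rw [slope]
    exact abs_le_max_abs_abs (σ_mono i.zero_le) (σ_le i)
  · obtain ⟨hi₁, hiN⟩ := hi
    induction i, hi₁ using Nat.le_induction with
    | base => simp [hV]
    | succ i hi ih =>
      have := slope i
      simp only [hσ, show max 1 (min i (N - 1)) = i by omega] at this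
      linarith [ih (by omega)]

theorem TwoSmallest.eq_of_isLowestPair {A : Matrix (Fin N) (Fin N) ℝ} {a₁ a₂ l₁ l₂ : ℝ}
    {x y : Fin N → ℝ} (h : TwoSmallest A a₁ a₂) (hlow : IsLowestPair A l₁ l₂ x y)
    (hA : A.IsSymm) (hl : l₁ < l₂) : a₁ = l₁ ∧ a₂ = l₂ := by
  obtain ⟨⟨w₁, hw₁, hAw₁⟩, ⟨w₂, hw₂, hAw₂⟩, hlt, hmin⟩ := h
  have fst_le := (hmin l₁ ⟨x, hlow.fst_ne_zero, hlow.mulVec_fst⟩).1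
  have hfst := (hlow.eq_fst_or_snd_le_of_mulVec_eq hA hw₁ hAw₁).resolve_right (by linarith)
  have hsnd := (hlow.eq_fst_or_snd_le_of_mulVec_eq hA hw₂ hAw₂).resolve_left (by grind)
  exact ⟨hfst, hsnd.antisymm' ((hmin l₂ ⟨y, hlow.snd_ne_zero, hlow.mulVec_snd⟩).2 (by grind))⟩

end Minimizer

/-- for every `N ≥ 2` and convex potential `W` on `{1,…,N}`, the fundamental
gap of `H_W(P_N)` is at least `2(1 - cos(π/N))`. -/
theorem path_gap_convex (N : ℕ) (hN : 2 ≤ N) (W : ℕ → ℝ)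
    (hW : ∀ i : ℕ, 2 ≤ i → i < N → 0 ≤ W (i - 1) - 2 * W i + W (i + 1))
    (l1 l2 : ℝ) (h : TwoSmallest (pathH N W) l1 l2) :
    l2 - l1 ≥ 2 * (1 - Real.cos (Real.pi / N)) := by
  obtain ⟨b, M, V, hV, hWV⟩ := exists_mem_convexPotentials_eqOn hN hW
  rw [pathH_congr hWV] at h
  obtain ⟨m₁, m₂, x, y, hlow, hpair⟩ := exists_isGroundExcitedPair hN V
  obtain ⟨rfl, rfl⟩ := h.eq_of_isLowestPair hlow (pathH_isSchrodinger N V).isSymm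
    (sub_pos.1 hpair.gap_pos)
  obtain ⟨α, a, γ, u, v, hline, hγ⟩ := exists_isGroundExcitedPair_line_le hN hV hlow
  exact (hline.two_mul_one_sub_cos_le hN).trans hγ
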